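/- arXiv:1802.04411 — 3 statements merged into one kernel-verified Lean document; each statement's English description precedes it below -/
import Mathlib

section
/- There exists an absolute constant C₁ > 0 such that for every 0 < γ ≤ 1, every 1 < p < ∞, every n ∈ ℕ, every f : C_n → ℝ, and every t > 0, one has ‖e^{tΔ_γ}(f − E f)‖_p ≤ e^{−k_γ t} ‖f − E f‖_p, where k_γ = (C₁ · c_p)^γ, c_p = 2·min(1/p, 1/p′), and p′ = p/(p−1). -/
/-!
Let `A` be the operator with symbol `|S|`, so that `A = -Δ`, and write `σ_r(y) = sgn(y) |y|^r`. For
`u` with `E u = 0`, three inequalities combine: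
* `E |u|^p ≤ 2 Var σ_{p/2}(u)`, by averaging over two independent copies of `u` the reverse
  Stroock–Varopoulos inequality `(σ_{p-1}(a) - σ_{p-1}(b)) (a - b) ≤ 2 (σ_{p/2}(a) - σ_{p/2}(b))²`;
* `Var g ≤ E |∇g|²`, the Poincaré inequality on the cube;
* `c_p E |∇σ_{p/2}(u)|² ≤ E (σ_{p-1}(u) · A u)`, the Stroock–Varopoulos inequality summed over the
  edges of the cube.

Hence `(c_p / 2) E |u|^p ≤ E (σ_{p-1}(u) · A u)`, that is, `A` is coercive in `L^p` with constant
`k = c_p / 2`. By duality, `A (s + A)⁻¹` is then coercive with constant `k / (s + k)`. Since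
`x ↦ x^γ` is a positive superposition of the functions `x ↦ x / (s + x)`, the power `A^γ` is
coercive with constant `k^γ`, and differentiating `E |e^{-tA^γ} u|^p` in `t` turns coercivity into
exponential decay.
-/

open Finset MeasureTheory Real

noncomputable section

/-- Expectation on the Hamming cube `{-1,1}^n`, modeled as `Fin n → Bool`
(`true ↔ 1`, `false ↔ -1`), with the uniform probability measure. -/
def cubeE {n : ℕ} (f : (Fin n → Bool) → ℝ) : ℝ :=
  (∑ x : Fin n → Bool, f x) / 2 ^ n

/-- The Walsh monomial `x^S = ∏_{i ∈ S} x_i`. -/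
def walsh {n : ℕ} (S : Finset (Fin n)) (x : Fin n → Bool) : ℝ :=
  ∏ i ∈ S, (if x i then (1 : ℝ) else -1)

/-- Fourier coefficient `f̂(S) = E (f · x^S)`. -/
def cubeFourier {n : ℕ} (f : (Fin n → Bool) → ℝ) (S : Finset (Fin n)) : ℝ :=
  cubeE fun x => f x * walsh S x

/-- The heat semigroup `e^{tΔ} f = Σ_S e^{-t|S|} f̂(S) x^S`. -/
def heat1 {n : ℕ} (t : ℝ) (f : (Fin n → Bool) → ℝ) : (Fin n → Bool) → ℝ :=
  fun x => ∑ S : Finset (Fin n), Real.exp (-t * (S.card : ℝ)) * cubeFourier f S * walsh S x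

/-- The fractional heat semigroup `e^{tΔ_γ} f = Σ_S e^{-t|S|^γ} f̂(S) x^S`. -/
def heatFrac {n : ℕ} (γ t : ℝ) (f : (Fin n → Bool) → ℝ) : (Fin n → Bool) → ℝ :=
  fun x => ∑ S : Finset (Fin n), Real.exp (-t * (S.card : ℝ) ^ γ) * cubeFourier f S * walsh S x

/-- The Laplacian `Δf = -Σ_S |S| f̂(S) x^S`. -/
def lap {n : ℕ} (f : (Fin n → Bool) → ℝ) : (Fin n → Bool) → ℝ :=
  fun x => -∑ S : Finset (Fin n), (S.card : ℝ) * cubeFourier f S * walsh S x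

/-- The fractional Laplacian `Δ_γ f = -Σ_S |S|^γ f̂(S) x^S`. -/
def fracLap {n : ℕ} (γ : ℝ) (f : (Fin n → Bool) → ℝ) : (Fin n → Bool) → ℝ :=
  fun x => -∑ S : Finset (Fin n), (S.card : ℝ) ^ γ * cubeFourier f S * walsh S x

/-- The discrete partial derivative `∇_j f`. -/
def cubeGrad {n : ℕ} (j : Fin n) (f : (Fin n → Bool) → ℝ) (x : Fin n → Bool) : ℝ :=
  (f (Function.update x j true) - f (Function.update x j false)) / 2

/-- The squared length of the discrete gradient, `|∇f|²(x) = Σ_j |∇_j f(x)|²`. -/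
def gradSq {n : ℕ} (f : (Fin n → Bool) → ℝ) (x : Fin n → Bool) : ℝ :=
  ∑ j : Fin n, (cubeGrad j f x) ^ 2

/-- The `L^p` norm `‖f‖_p = (E|f|^p)^{1/p}` on the Hamming cube. -/
def pNorm {n : ℕ} (p : ℝ) (f : (Fin n → Bool) → ℝ) : ℝ :=
  (cubeE fun x => |f x| ^ p) ^ (1 / p)

open scoped BigOperators

section Rpow

variable {a b r s : ℝ}

lemma sq_rpow_half_add (ha : 0 ≤ a) (hr : 0 < r) (hs : 0 < s) :
    (a ^ ((r + s) / 2)) ^ 2 = a ^ r * a ^ s := by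
  rw [← rpow_mul_natCast ha, ← rpow_add_of_nonneg ha hr.le hs.le]
  congr 1
  push_cast
  ring

lemma two_mul_rpow_half_add_mul_le (ha : 0 ≤ a) (hb : 0 ≤ b) (hr : 0 < r) (hs : 0 < s) :
    2 * (a ^ ((r + s) / 2) * b ^ ((r + s) / 2)) ≤ a ^ r * b ^ s + b ^ r * a ^ s := by
  refine two_mul_le_add_of_sq_le_mul (by positivity) (by positivity) (le_of_eq ?_)
  rw [mul_pow, sq_rpow_half_add ha hr hs, sq_rpow_half_add hb hr hs]
  ring

lemma mul_rpow_sub_rpow_le {m : ℝ} (ha : 0 ≤ a) (hb : 0 ≤ b) (hs : 0 < s) (hsm : s ≤ m) :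
    s / m * (a ^ m - b ^ m) ≤ a ^ (m - s) * (a ^ s - b ^ s) := by
  have hm : 0 < m := hs.trans_le hsm
  have young : a ^ (m - s) * b ^ s ≤ (m - s) / m * a ^ m + s / m * b ^ m := by
    have h := geom_mean_le_arith_mean2_weighted (w₁ := (m - s) / m) (w₂ := s / m)
      (div_nonneg (sub_nonneg.2 hsm) hm.le) (by positivity) (rpow_nonneg ha m) (rpow_nonneg hb m)
      (by field_simp; ring)
    rwa [← rpow_mul ha, ← rpow_mul hb, mul_div_cancel₀ _ hm.ne', mul_div_cancel₀ _ hm.ne'] at h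
  have split : a ^ (m - s) * a ^ s = a ^ m := by
    rw [← rpow_add_of_nonneg ha (sub_nonneg.2 hsm) hs.le, sub_add_cancel]
  have weights : (m - s) / m = 1 - s / m := by field_simp
  rw [weights] at young
  linarith

lemma min_mul_sq_rpow_sub_rpow_le_of_le (hb : 0 ≤ b) (hba : b ≤ a) (hs : 0 < s)
    (hsr : s ≤ r) :
    s / ((r + s) / 2) * (a ^ ((r + s) / 2) - b ^ ((r + s) / 2)) ^ 2 ≤
      (a ^ r - b ^ r) * (a ^ s - b ^ s) := by
  have ha : 0 ≤ a := hb.trans hba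
  set m := (r + s) / 2 with hm
  have hsm : s ≤ m := by linarith
  have hM : 0 ≤ a ^ m - b ^ m := sub_nonneg.2 (rpow_le_rpow hb hba (by linarith))
  have hS : 0 ≤ a ^ s - b ^ s := sub_nonneg.2 (rpow_le_rpow hb hba hs.le)
  have raise : a ^ (m - s) * (a ^ m - b ^ m) ≤ a ^ r - b ^ r := by
    have split (c : ℝ) (hc : 0 ≤ c) : c ^ (m - s) * c ^ m = c ^ r := by
      rw [← rpow_add_of_nonneg hc (by linarith) (by linarith), hm]
      congr 1
      ring
    rw [mul_sub, split a ha, ← split b hb]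
    gcongr
  calc s / m * (a ^ m - b ^ m) ^ 2
      = s / m * (a ^ m - b ^ m) * (a ^ m - b ^ m) := by ring
    _ ≤ a ^ (m - s) * (a ^ s - b ^ s) * (a ^ m - b ^ m) :=
      mul_le_mul_of_nonneg_right (mul_rpow_sub_rpow_le ha hb hs hsm) hM
    _ = a ^ (m - s) * (a ^ m - b ^ m) * (a ^ s - b ^ s) := by ring
    _ ≤ (a ^ r - b ^ r) * (a ^ s - b ^ s) := by gcongr

lemma min_mul_sq_rpow_sub_rpow_le (ha : 0 ≤ a) (hb : 0 ≤ b) (hr : 0 < r) (hs : 0 < s) :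
    min r s / ((r + s) / 2) * (a ^ ((r + s) / 2) - b ^ ((r + s) / 2)) ^ 2 ≤
      (a ^ r - b ^ r) * (a ^ s - b ^ s) := by
  wlog hsr : s ≤ r generalizing r s
  · simpa only [min_comm, add_comm, mul_comm] using this hs hr (le_of_not_ge hsr)
  wlog hba : b ≤ a generalizing a b
  · have h := this hb ha (le_of_not_ge hba)
    rw [sub_sq_comm]
    linarith
  rw [min_eq_right hsr]
  exact min_mul_sq_rpow_sub_rpow_le_of_le hb hba hs hsr

lemma rpow_sub_rpow_mul_rpow_sub_rpow_le (ha : 0 ≤ a) (hb : 0 ≤ b) (hr : 0 < r) (hs : 0 < s) :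
    (a ^ r - b ^ r) * (a ^ s - b ^ s) ≤ (a ^ ((r + s) / 2) - b ^ ((r + s) / 2)) ^ 2 := by
  linarith [two_mul_rpow_half_add_mul_le ha hb hr hs, sq_rpow_half_add ha hr hs,
    sq_rpow_half_add hb hr hs]

lemma sq_rpow_add_rpow_le (ha : 0 ≤ a) (hb : 0 ≤ b) (hr : 0 < r) (hs : 0 < s) :
    (a ^ ((r + s) / 2) + b ^ ((r + s) / 2)) ^ 2 ≤ (a ^ r + b ^ r) * (a ^ s + b ^ s) := by
  linarith [two_mul_rpow_half_add_mul_le ha hb hr hs, sq_rpow_half_add ha hr hs,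
    sq_rpow_half_add hb hr hs]

lemma rpow_add_rpow_mul_rpow_add_rpow_le (ha : 0 ≤ a) (hb : 0 ≤ b) (hr : 0 < r) (hs : 0 < s) :
    (a ^ r + b ^ r) * (a ^ s + b ^ s) ≤ 2 * (a ^ ((r + s) / 2) + b ^ ((r + s) / 2)) ^ 2 := by
  have rearrange : 0 ≤ (a ^ r - b ^ r) * (a ^ s - b ^ s) :=
    (by positivity : 0 ≤ min r s / ((r + s) / 2) * _ ^ 2).trans
      (min_mul_sq_rpow_sub_rpow_le ha hb hr hs)
  have cross : 0 ≤ a ^ ((r + s) / 2) * b ^ ((r + s) / 2) := by positivity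
  linarith [sq_rpow_half_add ha hr hs, sq_rpow_half_add hb hr hs]

end Rpow

section SignedRpow

/-- The signed power `sgn(y) |y|^r`, the odd extension of `y ↦ y ^ r`. For `r = p - 1` it is, up to
the factor `p`, the derivative of `|y|^p`. -/
def signedRpow (r y : ℝ) : ℝ := |y| ^ (r - 1) * y

variable {r s : ℝ}

lemma signedRpow_neg (r y : ℝ) : signedRpow r (-y) = -signedRpow r y := by
  simp [signedRpow]

lemma signedRpow_one (y : ℝ) : signedRpow 1 y = y := by
  simp [signedRpow]

lemma signedRpow_of_nonneg {y : ℝ} (hr : r ≠ 0) (hy : 0 ≤ y) : signedRpow r y = y ^ r := by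
  rcases hy.eq_or_lt with rfl | hy
  · simp [signedRpow, hr]
  · rw [signedRpow, abs_of_pos hy, rpow_sub_one hy.ne', div_mul_cancel₀ _ hy.ne']

lemma abs_signedRpow (hr : r ≠ 0) (y : ℝ) : |signedRpow r y| = |y| ^ r := by
  rw [signedRpow, abs_mul, abs_of_nonneg (by positivity), ← signedRpow_of_nonneg hr (abs_nonneg y),
    signedRpow, abs_abs]

lemma signedRpow_mul_signedRpow (hr : 0 < r) (hs : 0 < s) (y : ℝ) :
    signedRpow r y * signedRpow s y = |y| ^ (r + s) := by
  have same_sign : 0 ≤ signedRpow r y * signedRpow s y := by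
    have : signedRpow r y * signedRpow s y = |y| ^ (r - 1) * |y| ^ (s - 1) * y ^ 2 := by
      simp only [signedRpow]
      ring
    rw [this]
    positivity
  rw [← abs_of_nonneg same_sign, abs_mul, abs_signedRpow hr.ne', abs_signedRpow hs.ne',
    rpow_add_of_nonneg (abs_nonneg y) hr.le hs.le]

lemma signedRpow_sub_one_mul_self {p : ℝ} (hp : 1 < p) (y : ℝ) :
    signedRpow (p - 1) y * y = |y| ^ p := by
  simpa only [signedRpow_one, sub_add_cancel] using
    signedRpow_mul_signedRpow (sub_pos.2 hp) one_pos y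

lemma forall_of_neg_of_nonneg {P : ℝ → ℝ → Prop} (neg : ∀ a b, P a b → P (-a) (-b))
    (same : ∀ a b, 0 ≤ a → 0 ≤ b → P a b) (opposite : ∀ a b, 0 ≤ a → 0 ≤ b → P a (-b)) (a b : ℝ) :
    P a b := by
  have of_nonneg (a b : ℝ) (ha : 0 ≤ a) : P a b := by
    rcases le_total 0 b with hb | hb
    · exact same a b ha hb
    · simpa using opposite a (-b) ha (neg_nonneg.2 hb)
  rcases le_total 0 a with ha | ha
  · exact of_nonneg a b ha
  · simpa using neg (-a) (-b) (of_nonneg (-a) (-b) (neg_nonneg.2 ha))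

/-- The Stroock–Varopoulos inequality. The optimal constant is `4 * r * s / (r + s) ^ 2`; for
`r = p - 1` and `s = 1` the smaller one used here is the `c_p` of the theorem. -/
lemma min_mul_sq_signedRpow_sub_le (hr : 0 < r) (hs : 0 < s) (a b : ℝ) :
    min r s / ((r + s) / 2) *
        (signedRpow ((r + s) / 2) a - signedRpow ((r + s) / 2) b) ^ 2 ≤
      (signedRpow r a - signedRpow r b) * (signedRpow s a - signedRpow s b) := by
  have hm : 0 < (r + s) / 2 := by positivity
  induction a, b using forall_of_neg_of_nonneg with
  | neg a b h =>
    simp only [signedRpow_neg]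
    linarith
  | same a b ha hb =>
    simp only [signedRpow_of_nonneg, ha, hb, hr.ne', hs.ne', hm.ne', ne_eq, not_false_eq_true]
    exact min_mul_sq_rpow_sub_rpow_le ha hb hr hs
  | opposite a b ha hb =>
    simp only [signedRpow_neg, sub_neg_eq_add, signedRpow_of_nonneg, ha, hb, hr.ne', hs.ne',
      hm.ne', ne_eq, not_false_eq_true]
    have const_le_one : min r s / ((r + s) / 2) ≤ 1 := by
      rw [div_le_one hm]
      linarith [min_le_left r s, min_le_right r s]
    exact (mul_le_of_le_one_left (sq_nonneg _) const_le_one).trans (sq_rpow_add_rpow_le ha hb hr hs)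

lemma signedRpow_sub_mul_signedRpow_sub_le (hr : 0 < r) (hs : 0 < s) (a b : ℝ) :
    (signedRpow r a - signedRpow r b) * (signedRpow s a - signedRpow s b) ≤
      2 * (signedRpow ((r + s) / 2) a - signedRpow ((r + s) / 2) b) ^ 2 := by
  have hm : 0 < (r + s) / 2 := by positivity
  induction a, b using forall_of_neg_of_nonneg with
  | neg a b h =>
    simp only [signedRpow_neg]
    linarith
  | same a b ha hb =>
    simp only [signedRpow_of_nonneg, ha, hb, hr.ne', hs.ne', hm.ne', ne_eq, not_false_eq_true]
    refine (rpow_sub_rpow_mul_rpow_sub_rpow_le ha hb hr hs).trans ?_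
    exact le_mul_of_one_le_left (sq_nonneg _) one_le_two
  | opposite a b ha hb =>
    simp only [signedRpow_neg, sub_neg_eq_add, signedRpow_of_nonneg, ha, hb, hr.ne', hs.ne',
      hm.ne', ne_eq, not_false_eq_true]
    exact rpow_add_rpow_mul_rpow_add_rpow_le ha hb hr hs

lemma signedRpow_mul_le {p : ℝ} (hp : 1 < p) (a b : ℝ) :
    signedRpow (p - 1) a * b ≤ (1 - 1 / p) * |a| ^ p + 1 / p * |b| ^ p := by
  have young := young_inequality (signedRpow (p - 1) a) b (HolderConjugate.conjExponent hp).symm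
  have hp' : p - 1 ≠ 0 := by linarith
  have hp0 : p ≠ 0 := by linarith
  rw [abs_signedRpow hp', ← rpow_mul (abs_nonneg a), conjExponent, mul_div_cancel₀ p hp'] at young
  convert young using 2
  · field_simp
  · ring

end SignedRpow

section Expect

variable {Ω : Type*} [Fintype Ω]

lemma expect_expect_sub_mul_sub [Nonempty Ω] (f g : Ω → ℝ) :
    𝔼 x, 𝔼 y, (f x - f y) * (g x - g y) = 2 * (𝔼 x, f x * g x - (𝔼 x, f x) * 𝔼 x, g x) := by
  simp only [sub_mul, mul_sub, expect_sub_distrib, Fintype.expect_const, ← mul_expect, ← expect_mul]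
  ring

lemma expect_abs_rpow_le_two_mul_variance {p : ℝ} (hp : 1 < p) {u : Ω → ℝ} (hu : 𝔼 x, u x = 0) :
    𝔼 x, |u x| ^ p ≤
      2 * (𝔼 x, signedRpow (p / 2) (u x) ^ 2 - (𝔼 x, signedRpow (p / 2) (u x)) ^ 2) := by
  cases isEmpty_or_nonempty Ω
  · simp
  have hp' : 0 < p - 1 := sub_pos.2 hp
  have pointwise (x y : Ω) := signedRpow_sub_mul_signedRpow_sub_le hp' one_pos (u x) (u y)
  have averaged := expect_le_expect (s := univ) fun x _ ↦
    expect_le_expect (s := univ) fun y _ ↦ pointwise x y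
  simp only [← mul_expect, sq (_ - _ : ℝ), signedRpow_one, sub_add_cancel,
    expect_expect_sub_mul_sub, hu, mul_zero, sub_zero] at averaged
  simp only [signedRpow_sub_one_mul_self hp, ← sq] at averaged
  linarith

lemma expect_signedRpow_mul_le_of_le {p : ℝ} (hp : 1 < p) {u v : Ω → ℝ}
    (h : 𝔼 x, |v x| ^ p ≤ 𝔼 x, signedRpow (p - 1) (v x) * u x) :
    𝔼 x, signedRpow (p - 1) (u x) * v x ≤ 𝔼 x, |u x| ^ p := by
  have young (f g : Ω → ℝ) : 𝔼 x, signedRpow (p - 1) (f x) * g x ≤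
      (1 - 1 / p) * 𝔼 x, |f x| ^ p + 1 / p * 𝔼 x, |g x| ^ p := by
    simp only [mul_expect, ← expect_add_distrib]
    exact expect_le_expect fun x _ ↦ signedRpow_mul_le hp (f x) (g x)
  have contraction : 𝔼 x, |v x| ^ p ≤ 𝔼 x, |u x| ^ p := by
    have hp' : 0 < 1 / p := by positivity
    refine le_of_mul_le_mul_left ?_ hp'
    linarith [young v u]
  have hp' : 0 ≤ 1 / p := by positivity
  linarith [young u v, mul_le_mul_of_nonneg_left contraction hp']

lemma hasDerivAt_expect_abs_rpow {p t : ℝ} (hp : 1 < p) {u : ℝ → Ω → ℝ} {u' : Ω → ℝ}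
    (hu : ∀ x, HasDerivAt (fun τ ↦ u τ x) (u' x) t) :
    HasDerivAt (fun τ ↦ 𝔼 x, |u τ x| ^ p) (p * 𝔼 x, signedRpow (p - 1) (u t x) * u' x) t := by
  rw [mul_expect]
  simp only [Fintype.expect_eq_sum_div_card]
  refine HasDerivAt.div_const (HasDerivAt.fun_sum fun x _ ↦ ?_) _
  refine ((hasDerivAt_abs_rpow (u t x) hp).comp t (hu x)).congr_deriv ?_
  rw [signedRpow, sub_sub, one_add_one_eq_two]
  ring

end Expect

section Walsh

variable {n : ℕ}

lemma cubeE_eq_expect (f : (Fin n → Bool) → ℝ) : cubeE f = 𝔼 x, f x := by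
  simp [cubeE, Fintype.expect_eq_sum_div_card]

lemma cubeFourier_eq_expect (f : (Fin n → Bool) → ℝ) (S : Finset (Fin n)) :
    cubeFourier f S = 𝔼 x, f x * walsh S x :=
  cubeE_eq_expect _

lemma cubeFourier_empty (f : (Fin n → Bool) → ℝ) : cubeFourier f ∅ = 𝔼 x, f x := by
  simp [cubeFourier_eq_expect, walsh]

lemma walsh_mul_self (S : Finset (Fin n)) (x : Fin n → Bool) : walsh S x * walsh S x = 1 := by
  rw [walsh, ← prod_mul_distrib]
  exact prod_eq_one fun i _ ↦ by split_ifs <;> norm_num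

lemma sum_walsh_mul_walsh (x y : Fin n → Bool) :
    ∑ S, walsh S x * walsh S y = if x = y then 2 ^ n else 0 := by
  simp only [walsh, ← prod_mul_distrib]
  rw [← powerset_univ, ← prod_one_add]
  split_ifs with h
  · have factor (i : Fin n) :
        1 + (if x i then (1 : ℝ) else -1) * (if y i then 1 else -1) = 2 := by
      rw [h]
      split_ifs <;> norm_num
    simp only [factor, prod_const, card_univ, Fintype.card_fin]
  · obtain ⟨i, hi⟩ := Function.ne_iff.1 h
    refine prod_eq_zero (mem_univ i) ?_
    cases hx : x i <;> cases hy : y i <;> simp_all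

lemma expect_walsh_mul_walsh (S T : Finset (Fin n)) :
    𝔼 x, walsh S x * walsh T x = if S = T then 1 else 0 := by
  split_ifs with h
  · simp only [h, walsh_mul_self, Fintype.expect_one]
  obtain ⟨i, hi⟩ : ∃ i, ¬(i ∈ S ↔ i ∈ T) := by
    by_contra! hST
    exact h (Finset.ext hST)
  let ε (b : Bool) : ℝ := if b then 1 else -1
  have factored (x : Fin n → Bool) : walsh S x * walsh T x =
      ∏ j, (if j ∈ S then ε (x j) else 1) * (if j ∈ T then ε (x j) else 1) := by
    simp only [walsh, prod_mul_distrib, prod_ite_mem, univ_inter, ε]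
  have vanishing : ∑ b, (if i ∈ S then ε b else 1) * (if i ∈ T then ε b else 1) = 0 := by
    by_cases hS : i ∈ S <;> by_cases hT : i ∈ T <;> simp_all [ε]
  simp only [factored, Fintype.expect_eq_sum_div_card]
  rw [← Fintype.prod_sum fun j b ↦ (if j ∈ S then ε b else 1) * (if j ∈ T then ε b else 1),
    prod_eq_zero (mem_univ i) vanishing, zero_div]

lemma sum_cubeFourier_mul_walsh (f : (Fin n → Bool) → ℝ) (x : Fin n → Bool) :
    ∑ S, cubeFourier f S * walsh S x = f x := by
  simp only [cubeFourier_eq_expect, expect_mul, mul_assoc, ← expect_sum_comm, ← mul_sum,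
    sum_walsh_mul_walsh]
  rw [Fintype.expect_eq_sum_div_card]
  simp

lemma expect_mul_eq_sum_cubeFourier (f g : (Fin n → Bool) → ℝ) :
    𝔼 x, f x * g x = ∑ S, cubeFourier f S * cubeFourier g S := by
  calc 𝔼 x, f x * g x
      = 𝔼 x, ∑ S, f x * walsh S x * cubeFourier g S := by
        refine expect_congr rfl fun x _ ↦ ?_
        rw [← sum_cubeFourier_mul_walsh g x, mul_sum]
        exact sum_congr rfl fun S _ ↦ by ring
    _ = ∑ S, cubeFourier f S * cubeFourier g S := by
        simp only [expect_sum_comm, ← expect_mul, ← cubeFourier_eq_expect]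

/-- The Fourier multiplier on the Hamming cube with symbol `m`, acting by
`f ↦ Σ_S m(S) f̂(S) x^S`; both the fractional Laplacians (up to sign) and their heat semigroups
are of this form. -/
def walshMultiplier (m : Finset (Fin n) → ℝ) (f : (Fin n → Bool) → ℝ) : (Fin n → Bool) → ℝ :=
  fun x ↦ ∑ S, m S * cubeFourier f S * walsh S x

lemma walshMultiplier_one (f : (Fin n → Bool) → ℝ) : walshMultiplier (fun _ ↦ 1) f = f := by
  ext x
  simp only [walshMultiplier, one_mul, sum_cubeFourier_mul_walsh]

lemma cubeFourier_walshMultiplier (m : Finset (Fin n) → ℝ) (f : (Fin n → Bool) → ℝ)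
    (S : Finset (Fin n)) : cubeFourier (walshMultiplier m f) S = m S * cubeFourier f S := by
  simp only [cubeFourier_eq_expect (walshMultiplier m f), walshMultiplier, sum_mul,
    expect_sum_comm, mul_assoc, ← mul_expect, expect_walsh_mul_walsh]
  simp

lemma expect_walshMultiplier_eq_zero (m : Finset (Fin n) → ℝ) {f : (Fin n → Bool) → ℝ}
    (hf : 𝔼 x, f x = 0) : 𝔼 x, walshMultiplier m f x = 0 := by
  rw [← cubeFourier_empty] at hf ⊢
  rw [cubeFourier_walshMultiplier, hf, mul_zero]

lemma expect_mul_walshMultiplier (m : Finset (Fin n) → ℝ) (f g : (Fin n → Bool) → ℝ) :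
    𝔼 x, f x * walshMultiplier m g x = ∑ S, m S * (cubeFourier f S * cubeFourier g S) := by
  simp only [expect_mul_eq_sum_cubeFourier, cubeFourier_walshMultiplier, mul_left_comm]

lemma hasDerivAt_walshMultiplier_exp (m : Finset (Fin n) → ℝ) (f : (Fin n → Bool) → ℝ)
    (x : Fin n → Bool) (t : ℝ) :
    HasDerivAt (fun τ ↦ walshMultiplier (fun S ↦ exp (-τ * m S)) f x)
      (-walshMultiplier m (walshMultiplier (fun S ↦ exp (-t * m S)) f) x) t := by
  simp only [walshMultiplier.eq_def m, cubeFourier_walshMultiplier, ← sum_neg_distrib]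
  refine HasDerivAt.fun_sum fun S _ ↦ ?_
  have exponent : HasDerivAt (fun τ ↦ -τ * m S) (-m S) t := by
    simpa using (hasDerivAt_neg t).mul_const (m S)
  refine ((exponent.exp.mul_const _).mul_const _).congr_deriv ?_
  ring

end Walsh

section DirichletForm

variable {n : ℕ}

lemma walsh_singleton_mul_cubeGrad_walsh (j : Fin n) (S : Finset (Fin n)) (x : Fin n → Bool) :
    walsh {j} x * cubeGrad j (walsh S) x = if j ∈ S then walsh S x else 0 := by
  let ε (b : Bool) : ℝ := if b then 1 else -1
  have walsh_update (b : Bool) : walsh S (Function.update x j b) =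
      ∏ i ∈ S, Function.update (fun i ↦ ε (x i)) j (ε b) i :=
    prod_congr rfl fun i _ ↦ (Function.apply_update (fun _ ↦ ε) x j b i)
  rw [cubeGrad, walsh_update, walsh_update]
  split_ifs with hj
  · rw [prod_update_of_mem hj, prod_update_of_mem hj, walsh, walsh, prod_singleton,
      ← mul_prod_erase S _ hj, sdiff_singleton_eq_erase]
    simp only [ε]
    norm_num
  · simp [prod_update_of_notMem hj]

lemma walsh_singleton_mul_cubeGrad (j : Fin n) (f : (Fin n → Bool) → ℝ) (x : Fin n → Bool) :
    walsh {j} x * cubeGrad j f x = walshMultiplier (fun S ↦ if j ∈ S then 1 else 0) f x := by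
  have expansion : cubeGrad j f x = ∑ S, cubeFourier f S * cubeGrad j (walsh S) x := by
    simp only [cubeGrad, mul_div_assoc', mul_sub, ← sum_div, sum_sub_distrib,
      sum_cubeFourier_mul_walsh]
  rw [expansion, mul_sum]
  refine sum_congr rfl fun S _ ↦ ?_
  rw [mul_left_comm, walsh_singleton_mul_cubeGrad_walsh]
  by_cases hj : j ∈ S <;> simp [hj]

lemma expect_cubeGrad_mul_cubeGrad (j : Fin n) (f g : (Fin n → Bool) → ℝ) :
    𝔼 x, cubeGrad j f x * cubeGrad j g x =
      ∑ S, (if j ∈ S then 1 else 0) * (cubeFourier f S * cubeFourier g S) := by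
  have insert_sign (x : Fin n → Bool) : cubeGrad j f x * cubeGrad j g x =
      (walsh {j} x * cubeGrad j f x) * (walsh {j} x * cubeGrad j g x) := by
    rw [mul_mul_mul_comm, walsh_mul_self, one_mul]
  simp only [insert_sign, walsh_singleton_mul_cubeGrad, expect_mul_walshMultiplier,
    cubeFourier_walshMultiplier]
  exact sum_congr rfl fun S _ ↦ by split_ifs <;> ring

lemma expect_mul_walshMultiplier_card (f g : (Fin n → Bool) → ℝ) :
    𝔼 x, f x * walshMultiplier (fun S ↦ (#S : ℝ)) g x =
      𝔼 x, ∑ j, cubeGrad j f x * cubeGrad j g x := by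
  rw [expect_sum_comm]
  simp only [expect_mul_walshMultiplier, expect_cubeGrad_mul_cubeGrad]
  rw [sum_comm]
  simp only [← sum_mul, sum_boole, filter_univ_mem]

lemma variance_le_expect_gradSq (f : (Fin n → Bool) → ℝ) :
    𝔼 x, f x ^ 2 - (𝔼 x, f x) ^ 2 ≤ 𝔼 x, gradSq f x := by
  have energy : 𝔼 x, gradSq f x = ∑ S, (#S : ℝ) * cubeFourier f S ^ 2 := by
    simp only [gradSq, sq, ← expect_mul_walshMultiplier_card, expect_mul_walshMultiplier]
  have parseval : 𝔼 x, f x ^ 2 = ∑ S, cubeFourier f S ^ 2 := by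
    simp only [sq, expect_mul_eq_sum_cubeFourier]
  rw [energy, parseval, ← cubeFourier_empty, ← add_sum_erase univ _ (mem_univ ∅),
    add_sub_cancel_left, ← add_sum_erase univ (fun S ↦ (#S : ℝ) * cubeFourier f S ^ 2) (mem_univ ∅),
    card_empty, Nat.cast_zero, zero_mul, zero_add]
  refine sum_le_sum fun S hS ↦ le_mul_of_one_le_left (sq_nonneg _) ?_
  exact_mod_cast card_pos.2 (nonempty_iff_ne_empty.2 (ne_of_mem_erase hS))

lemma min_mul_expect_gradSq_signedRpow_le {r s : ℝ} (hr : 0 < r) (hs : 0 < s)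
    (f : (Fin n → Bool) → ℝ) :
    min r s / ((r + s) / 2) * 𝔼 x, gradSq (fun y ↦ signedRpow ((r + s) / 2) (f y)) x ≤
      𝔼 x, signedRpow r (f x) *
        walshMultiplier (fun S ↦ (#S : ℝ)) (fun y ↦ signedRpow s (f y)) x := by
  rw [expect_mul_walshMultiplier_card fun x ↦ signedRpow r (f x), mul_expect]
  refine expect_le_expect fun x _ ↦ ?_
  rw [gradSq, mul_sum]
  refine sum_le_sum fun j _ ↦ ?_
  simp only [cubeGrad]
  linarith [min_mul_sq_signedRpow_sub_le hr hs (f (Function.update x j true))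
    (f (Function.update x j false))]

end DirichletForm

section Coercivity

variable {n : ℕ} {p k : ℝ} {m : Finset (Fin n) → ℝ}

/-- The multiplier `A` with symbol `m` satisfies `E (|u|^{p-2} u · A u) ≥ k E |u|^p` for all
mean-zero `u`. This is the infinitesimal form of the decay `‖e^{-tA} u‖_p ≤ e^{-kt} ‖u‖_p`. -/
def IsLpCoercive (p k : ℝ) (m : Finset (Fin n) → ℝ) : Prop :=
  ∀ u : (Fin n → Bool) → ℝ, 𝔼 x, u x = 0 →
    k * 𝔼 x, |u x| ^ p ≤ 𝔼 x, signedRpow (p - 1) (u x) * walshMultiplier m u x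

lemma isLpCoercive_card (hp : 1 < p) :
    IsLpCoercive p (min (p - 1) 1 / p) fun S : Finset (Fin n) ↦ (#S : ℝ) := by
  intro u hu
  have hp' : 0 < p - 1 := sub_pos.2 hp
  have stroock_varopoulos := min_mul_expect_gradSq_signedRpow_le hp' one_pos u
  simp only [sub_add_cancel, signedRpow_one] at stroock_varopoulos
  have poincare := variance_le_expect_gradSq fun x ↦ signedRpow (p / 2) (u x)
  have variance := expect_abs_rpow_le_two_mul_variance hp hu
  calc min (p - 1) 1 / p * 𝔼 x, |u x| ^ p
      ≤ min (p - 1) 1 / p * (2 * 𝔼 x, gradSq (fun y ↦ signedRpow (p / 2) (u y)) x) := by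
        gcongr
        linarith
    _ = min (p - 1) 1 / (p / 2) * 𝔼 x, gradSq (fun y ↦ signedRpow (p / 2) (u y)) x := by
        field_simp
    _ ≤ _ := stroock_varopoulos

namespace IsLpCoercive

/-- The new symbol is that of the Yosida approximation `A (s + A)⁻¹ = 1 - s (s + A)⁻¹`, so the claim
is an upper bound for the resolvent; it is dual to coercivity at `v = (s + k) (s + A)⁻¹ u`. -/
lemma div_add (h : IsLpCoercive p k m) (hp : 1 < p) (hk : 0 ≤ k) (hm : ∀ S, 0 ≤ m S) {s : ℝ}
    (hs : 0 < s) : IsLpCoercive p (k / (s + k)) fun S ↦ m S / (s + m S) := by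
  intro u hu
  have hsk : 0 < s + k := by positivity
  have hsm (S : Finset (Fin n)) : s + m S ≠ 0 := (add_pos_of_pos_of_nonneg hs (hm S)).ne'
  let v := walshMultiplier (fun S ↦ (s + k) / (s + m S)) u
  have coeff (S : Finset (Fin n)) : cubeFourier v S = (s + k) / (s + m S) * cubeFourier u S :=
    cubeFourier_walshMultiplier _ u S
  have resolvent : (s + k) * 𝔼 x, signedRpow (p - 1) (v x) * u x =
      s * 𝔼 x, |v x| ^ p + 𝔼 x, signedRpow (p - 1) (v x) * walshMultiplier m v x := by
    simp only [← signedRpow_sub_one_mul_self hp, expect_mul_walshMultiplier,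
      expect_mul_eq_sum_cubeFourier, mul_sum, ← sum_add_distrib]
    refine sum_congr rfl fun S _ ↦ ?_
    have := hsm S
    rw [coeff]
    field_simp
  have dual : 𝔼 x, signedRpow (p - 1) (u x) * v x ≤ 𝔼 x, |u x| ^ p := by
    refine expect_signedRpow_mul_le_of_le hp (le_of_mul_le_mul_left ?_ hsk)
    linarith [h v (expect_walshMultiplier_eq_zero _ hu)]
  have complement : 𝔼 x, signedRpow (p - 1) (u x) * walshMultiplier (fun S ↦ m S / (s + m S)) u x =
      𝔼 x, |u x| ^ p - s / (s + k) * 𝔼 x, signedRpow (p - 1) (u x) * v x := by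
    simp only [← signedRpow_sub_one_mul_self hp, expect_mul_walshMultiplier,
      expect_mul_eq_sum_cubeFourier, mul_sum, ← sum_sub_distrib]
    refine sum_congr rfl fun S _ ↦ ?_
    have := hsm S
    rw [coeff]
    field_simp
    ring
  have split : k / (s + k) = 1 - s / (s + k) := by
    field_simp
    ring
  rw [complement, split, sub_mul, one_mul]
  gcongr

lemma rpow (h : IsLpCoercive p k m) (hp : 1 < p) (hk : 0 ≤ k) (hm : ∀ S, 0 ≤ m S) {γ : ℝ}
    (hγ : 0 < γ) (hγ' : γ ≤ 1) : IsLpCoercive p (k ^ γ) fun S ↦ m S ^ γ := by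
  rcases hγ'.eq_or_lt with rfl | hγ'
  · simpa only [rpow_one] using h
  intro u hu
  have hγ₀₁ : γ ∈ Set.Ioo 0 1 := ⟨hγ, hγ'⟩
  obtain ⟨μ, hμ⟩ := exists_measure_rpow_eq_integral_rpowIntegrand₀₁ hγ₀₁
  let σu : (Fin n → Bool) → ℝ := fun x ↦ signedRpow (p - 1) (u x)
  let c (S : Finset (Fin n)) : ℝ := cubeFourier σu S * cubeFourier u S
  have integrable (S : Finset (Fin n)) :
      IntegrableOn (fun t ↦ rpowIntegrand₀₁ γ t (m S) * c S) (Set.Ioi 0) μ :=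
    (hμ (m S) (hm S)).1.mul_const _
  have pointwise : ∀ t ∈ Set.Ioi (0 : ℝ), rpowIntegrand₀₁ γ t k * 𝔼 x, |u x| ^ p ≤
      ∑ S, rpowIntegrand₀₁ γ t (m S) * c S := by
    intro t (ht : 0 < t)
    have yosida := h.div_add hp hk hm ht u hu
    rw [expect_mul_walshMultiplier (f := σu)] at yosida
    have integrand (x : ℝ) (hx : 0 ≤ x) : rpowIntegrand₀₁ γ t x = t ^ (γ - 1) * (x / (t + x)) := by
      rw [rpowIntegrand₀₁_eq_pow_div hγ₀₁ ht.le hx, mul_div_assoc]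
    simp only [integrand, hk, hm, mul_assoc, ← mul_sum]
    gcongr
  calc k ^ γ * 𝔼 x, |u x| ^ p
      = ∫ t in Set.Ioi 0, rpowIntegrand₀₁ γ t k * 𝔼 x, |u x| ^ p ∂μ := by
        rw [integral_mul_const, ← (hμ k hk).2]
    _ ≤ ∫ t in Set.Ioi 0, ∑ S, rpowIntegrand₀₁ γ t (m S) * c S ∂μ :=
        setIntegral_mono_on ((hμ k hk).1.mul_const _)
          (integrable_finsetSum _ fun S _ ↦ integrable S) measurableSet_Ioi pointwise
    _ = ∑ S, m S ^ γ * c S := by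
        rw [integral_finsetSum _ fun S _ ↦ integrable S]
        exact sum_congr rfl fun S _ ↦ by rw [integral_mul_const, ← (hμ (m S) (hm S)).2]
    _ = _ := (expect_mul_walshMultiplier _ σu u).symm

lemma antitone_exp_mul_expect (h : IsLpCoercive p k m) (hp : 1 < p) {u : (Fin n → Bool) → ℝ}
    (hu : 𝔼 x, u x = 0) :
    Antitone fun t ↦ exp (k * p * t) *
      𝔼 x, |walshMultiplier (fun S ↦ exp (-t * m S)) u x| ^ p := by
  have deriv (t : ℝ) := (((hasDerivAt_id t).const_mul (k * p)).exp).mul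
    (hasDerivAt_expect_abs_rpow hp fun x ↦ hasDerivAt_walshMultiplier_exp m u x t)
  refine antitone_of_hasDerivAt_nonpos deriv fun t ↦ ?_
  have coercive := h _ (expect_walshMultiplier_eq_zero (fun S ↦ exp (-t * m S)) hu)
  have factor : 0 ≤ exp (k * p * t) * p := by positivity
  simp only [mul_neg, expect_neg_distrib, id, mul_one, Pi.zero_apply]
  linarith [mul_le_mul_of_nonneg_left coercive factor]

lemma pNorm_walshMultiplier_exp_le (h : IsLpCoercive p k m) (hp : 1 < p)
    {u : (Fin n → Bool) → ℝ} (hu : 𝔼 x, u x = 0) {t : ℝ} (ht : 0 ≤ t) :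
    pNorm p (walshMultiplier (fun S ↦ exp (-t * m S)) u) ≤ exp (-k * t) * pNorm p u := by
  have hp₀ : p ≠ 0 := by positivity
  have decay := h.antitone_exp_mul_expect hp hu ht
  simp only [neg_zero, zero_mul, mul_zero, exp_zero, walshMultiplier_one, one_mul] at decay
  rw [← le_div_iff₀' (exp_pos _), div_eq_inv_mul, ← exp_neg] at decay
  have root : exp (-k * t) = exp (-(k * p * t)) ^ (1 / p) := by
    rw [← exp_mul]
    congr 1
    field_simp
  have hu₀ : 0 ≤ 𝔼 x, |u x| ^ p := expect_nonneg fun x _ ↦ by positivity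
  simp only [pNorm, cubeE_eq_expect]
  rw [root, ← mul_rpow (exp_pos _).le hu₀]
  exact rpow_le_rpow (expect_nonneg fun x _ ↦ by positivity) decay (by positivity)

end IsLpCoercive

end Coercivity

/-- Spectral gap for the fractional heat semigroup in `L^p`, `1 < p < ∞`,
`0 < γ ≤ 1`: there is an absolute constant `C₁ > 0` such that with
`k_γ = (C₁ · c_p)^γ`, `c_p = 2 min(1/p, 1/p')`, `p' = p/(p-1)`, one has
`‖e^{tΔ_γ}(f - Ef)‖_p ≤ e^{-k_γ t} ‖f - Ef‖_p` for all `n`, `f`, `t > 0`. -/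
theorem stmt6 :
    ∃ C₁ : ℝ, 0 < C₁ ∧
      ∀ γ : ℝ, 0 < γ → γ ≤ 1 →
        ∀ p : ℝ, 1 < p →
          ∀ (n : ℕ) (f : (Fin n → Bool) → ℝ) (t : ℝ), 0 < t →
            pNorm p (heatFrac γ t fun x => f x - cubeE f) ≤
              Real.exp (-((C₁ * (2 * min (1 / p) (1 / (p / (p - 1))))) ^ γ) * t) *
                pNorm p (fun x => f x - cubeE f) := by
  refine ⟨1 / 2, by norm_num, fun γ hγ hγ' p hp n f t ht ↦ ?_⟩
  have mean_zero : 𝔼 x, (f x - cubeE f) = 0 := by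
    rw [expect_sub_distrib, Fintype.expect_const, cubeE_eq_expect, sub_self]
  have rate : 1 / 2 * (2 * min (1 / p) (1 / (p / (p - 1)))) = min (p - 1) 1 / p := by
    rw [one_div_div, min_div_div_right (by positivity), min_comm]
    ring
  have rate_nonneg : 0 ≤ min (p - 1) 1 / p :=
    div_nonneg (le_min (sub_nonneg.2 hp.le) zero_le_one) (by positivity)
  have coercive : IsLpCoercive p ((min (p - 1) 1 / p) ^ γ) fun S : Finset (Fin n) ↦ (#S : ℝ) ^ γ :=
    (isLpCoercive_card hp).rpow hp rate_nonneg (fun S ↦ by positivity) hγ hγ'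
  rw [rate]
  exact coercive.pNorm_walshMultiplier_exp_le hp mean_zero ht.le
end
end

section
/- For every γ with 0 < γ < 1 there exists a constant b_γ > 0, independent of n and k, such that the following holds: for every n ∈ ℕ, every k ≥ 1, and every f : C_n → ℝ whose Fourier coefficients satisfy f̂(∅) = 0 and f̂(S) = 0 whenever |S| > k, one has b_γ · k^{−γ} · 3^{−3k} · ‖f‖₁ ≤ E[(−Δ_γ f) · sgn(f) · 1_{f ≠ 0}] − E[|Δ_γ f| · 1_{f = 0}]. -/
open Finset MeasureTheory Real

noncomputable section

/-!
Choose `h` with `|h| ≤ 1` and `h f = |f|` for which the right-hand side of the inequality is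
`E[h · (-Δ_γ f)]`, and let `q(ρ) = E[h · T_ρ f]`, where `T_ρ` multiplies `f̂(S)` by `ρ^|S|`. This is
a polynomial of degree at most `k` with `q(0) = 0` and, as `T_ρ` contracts `L¹`, with
`|q| ≤ q(1) = ‖f‖₁` on `[0, 1]`. Subordination gives, for a constant `c_γ > 0`,
`E[h · (-Δ_γ f)] = c_γ⁻¹ ∫₀^∞ (q(1) - q(e^{-s})) s^{-γ-1} ds`, with a nonnegative integrand. By
Markov's inequality for the derivative of a polynomial, `|q(ρ)| ≤ 4 k² ρ q(1)` for `ρ ≤ 1/2`, so the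
integrand is at least `q(1) s^{-γ-1} / 2` once `s ≥ log (8 k²)`. This bounds the integral below by a
multiple of `(1 + log k)^{-γ} ‖f‖₁`, which is much more than is asked for.
-/

section Markov

open Polynomial

variable {q : ℝ[X]} {k : ℕ} {a b M : ℝ}

lemma abs_eval_derivative_one_le_of_forall_abs_le (hdeg : q.degree ≤ k)
    (hq : ∀ x ∈ Set.Icc (-1) 1, |q.eval x| ≤ M) : |q.derivative.eval 1| ≤ k ^ 2 * M := by
  have hM : 0 ≤ M := (abs_nonneg _).trans (hq 1 (by simp))
  rcases hM.eq_or_lt with rfl | hM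
  · have hq0 : q = 0 := q.eq_zero_of_infinite_isRoot <|
      (Set.Icc_infinite (by norm_num : (-1 : ℝ) < 1)).mono fun x hx =>
        abs_nonpos_iff.mp (hq x hx)
    simp [hq0]
  have markov : ∀ p : ℝ[X], p.degree ≤ k → (∀ x ∈ Set.Icc (-1) 1, |p.eval x| ≤ M) →
      p.derivative.eval 1 ≤ k ^ 2 * M := by
    intro p hpdeg hp
    have hscale : (C M⁻¹ * p).degree ≤ k :=
      (degree_C_mul (inv_ne_zero hM.ne')).trans_le hpdeg
    have hderiv := Polynomial.Chebyshev.eval_iterate_derivative_le_of_forall_abs_le_one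
      (k := 1) le_rfl hscale fun x hx => by
        rw [eval_C_mul, abs_mul, abs_of_pos (inv_pos.mpr hM), inv_mul_le_one₀ hM]
        exact hp x hx
    simpa [Polynomial.Chebyshev.derivative_T_eval_one, inv_mul_le_iff₀ hM, mul_comm M]
      using hderiv
  refine abs_le'.mpr ⟨markov q hdeg hq, ?_⟩
  simpa using markov (-q) (by simpa using hdeg) (by simpa using hq)

lemma abs_eval_derivative_left_le_of_forall_abs_le (hab : a < b) (hdeg : q.degree ≤ k)
    (hq : ∀ x ∈ Set.Icc a b, |q.eval x| ≤ M) :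
    |q.derivative.eval a| ≤ 2 * k ^ 2 / (b - a) * M := by
  have hba : 0 < b - a := sub_pos.mpr hab
  set ℓ : ℝ[X] := C a + C ((b - a) / 2) * (1 - X) with hℓ
  have hℓ_eval (x : ℝ) : ℓ.eval x = a + (b - a) / 2 * (1 - x) := by simp [hℓ]
  have hcomp := abs_eval_derivative_one_le_of_forall_abs_le (q := q.comp ℓ) (k := k) (M := M)
    (by
      rw [← natDegree_le_iff_degree_le] at hdeg ⊢
      have hℓ_deg : ℓ.natDegree ≤ 1 := by rw [hℓ]; compute_degree
      calc (q.comp ℓ).natDegree ≤ q.natDegree * ℓ.natDegree := natDegree_comp_le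
        _ ≤ k * 1 := Nat.mul_le_mul hdeg hℓ_deg
        _ = k := mul_one k)
    fun x hx => by
      rw [eval_comp, hℓ_eval]
      exact hq _ ⟨by nlinarith [hx.2], by nlinarith [hx.1]⟩
  have hderiv : (q.comp ℓ).derivative.eval 1 = -((b - a) / 2) * q.derivative.eval a := by
    rw [derivative_comp, eval_mul, eval_comp, hℓ_eval]
    simp [hℓ]
  rw [hderiv, abs_mul, abs_neg, abs_of_pos (half_pos hba)] at hcomp
  rw [div_mul_eq_mul_div, le_div_iff₀ hba]
  linarith

lemma abs_eval_le_mul_of_eval_zero_eq_zero (hdeg : q.degree ≤ k) (h0 : q.eval 0 = 0)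
    (hq : ∀ x ∈ Set.Icc 0 1, |q.eval x| ≤ M) {ρ : ℝ} (hρ : ρ ∈ Set.Icc 0 (1 / 2)) :
    |q.eval ρ| ≤ 4 * k ^ 2 * M * ρ := by
  have hM : 0 ≤ M := (abs_nonneg _).trans (hq 0 (by simp))
  have hderiv : ∀ x ∈ Set.Icc (0 : ℝ) (1 / 2), ‖q.derivative.eval x‖ ≤ 4 * k ^ 2 * M := by
    intro x hx
    have hx1 : x < 1 := by linarith [hx.2]
    calc |q.derivative.eval x| ≤ 2 * k ^ 2 / (1 - x) * M :=
          abs_eval_derivative_left_le_of_forall_abs_le hx1 hdeg fun y hy =>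
            hq y ⟨hx.1.trans hy.1, hy.2⟩
      _ ≤ 2 * k ^ 2 / (1 / 2) * M := by gcongr; linarith [hx.2]
      _ = 4 * k ^ 2 * M := by ring
  have hmean := (convex_Icc (0 : ℝ) (1 / 2)).norm_image_sub_le_of_norm_hasDerivWithin_le
    (fun x _ => (q.hasDerivAt x).hasDerivWithinAt) hderiv
    (show (0 : ℝ) ∈ Set.Icc 0 (1 / 2) by norm_num) hρ
  simpa [h0, abs_of_nonneg hρ.1] using hmean

end Markov

section Subordination

open Polynomial

variable {γ : ℝ}

lemma integrableOn_rpow_mul_one_sub_exp (hγ0 : 0 < γ) (hγ1 : γ < 1) {a : ℝ} (ha : 0 ≤ a) :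
    IntegrableOn (fun s : ℝ => s ^ (-γ - 1) * (1 - exp (-(a * s)))) (Set.Ioi 0) := by
  have hnorm {s : ℝ} (hs : 0 < s) :
      ‖1 - exp (-(a * s))‖ ≤ 1 ∧ ‖1 - exp (-(a * s))‖ ≤ a * s := by
    have hle : exp (-(a * s)) ≤ 1 := exp_le_one_iff.mpr (by nlinarith)
    rw [Real.norm_of_nonneg (by linarith)]
    constructor <;> linarith [add_one_le_exp (-(a * s)), exp_pos (-(a * s))]
  refine mellin_convergent_of_isBigO_scalar (a := 0) (b := -1) ?_ ?_ (by linarith) ?_ (by linarith)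
  · exact Continuous.locallyIntegrable (by fun_prop) |>.locallyIntegrableOn _
  · refine Asymptotics.IsBigO.of_bound 1 ?_
    filter_upwards [Filter.eventually_gt_atTop 0] with s hs
    simpa using (hnorm hs).1
  · refine Asymptotics.IsBigO.of_bound a ?_
    filter_upwards [self_mem_nhdsWithin] with s hs
    simpa [abs_of_pos hs.out] using (hnorm hs).2

/-- The constant `c_γ` of the subordination formula `a ^ γ = c_γ⁻¹ ∫₀^∞ (1 - e^{-as}) s^{-γ-1} ds`,
valid for `a ≥ 0` and `0 < γ < 1`. -/
def subordinationConst (γ : ℝ) : ℝ :=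
  ∫ s in Set.Ioi (0 : ℝ), s ^ (-γ - 1) * (1 - exp (-s))

lemma integral_rpow_mul_one_sub_exp (hγ : γ ≠ 0) {a : ℝ} (ha : 0 ≤ a) :
    ∫ s in Set.Ioi (0 : ℝ), s ^ (-γ - 1) * (1 - exp (-(a * s))) =
      subordinationConst γ * a ^ γ := by
  rcases ha.eq_or_lt with rfl | ha
  · simp [zero_rpow hγ]
  have hscale := integral_comp_mul_left_Ioi (fun s : ℝ => s ^ (-γ - 1) * (1 - exp (-s))) 0 ha
  have hpull : ∫ s in Set.Ioi (0 : ℝ), (a * s) ^ (-γ - 1) * (1 - exp (-(a * s))) =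
      a ^ (-γ - 1) * ∫ s in Set.Ioi (0 : ℝ), s ^ (-γ - 1) * (1 - exp (-(a * s))) := by
    rw [← integral_const_mul]
    refine setIntegral_congr_fun measurableSet_Ioi fun s hs => ?_
    simp only [mul_rpow ha.le (le_of_lt hs), mul_assoc]
  rw [mul_zero, hpull, rpow_sub_one ha.ne', rpow_neg ha.le, smul_eq_mul,
    ← subordinationConst] at hscale
  have : 0 < a ^ γ := rpow_pos_of_pos ha γ
  field_simp at hscale
  linarith

lemma mul_rpow_div_le_setIntegral {φ : ℝ → ℝ} {c T : ℝ} (hγ : 0 < γ) (hT : 0 < T)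
    (hint : IntegrableOn (fun s => s ^ (-γ - 1) * φ s) (Set.Ioi 0))
    (hφ : ∀ s, 0 < s → 0 ≤ φ s) (hc : ∀ s, T < s → c ≤ φ s) :
    c * (T ^ (-γ) / γ) ≤ ∫ s in Set.Ioi 0, s ^ (-γ - 1) * φ s := by
  have hsub : Set.Ioi T ⊆ Set.Ioi 0 := Set.Ioi_subset_Ioi hT.le
  calc c * (T ^ (-γ) / γ) = ∫ s in Set.Ioi T, s ^ (-γ - 1) * c := by
        rw [integral_mul_const, integral_Ioi_rpow_of_lt (by linarith) hT, sub_add_cancel,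
          neg_div_neg_eq, mul_comm]
    _ ≤ ∫ s in Set.Ioi T, s ^ (-γ - 1) * φ s := by
        refine setIntegral_mono_on ((integrableOn_Ioi_rpow_of_lt (by linarith) hT).mul_const c)
          (hint.mono_set hsub) measurableSet_Ioi fun s hs => ?_
        exact mul_le_mul_of_nonneg_left (hc s hs) (rpow_nonneg (hsub hs).out.le _)
    _ ≤ ∫ s in Set.Ioi 0, s ^ (-γ - 1) * φ s := by
        refine setIntegral_mono_set hint ?_ hsub.eventuallyLE
        filter_upwards [ae_restrict_mem measurableSet_Ioi] with s hs
        exact mul_nonneg (rpow_nonneg hs.out.le _) (hφ s hs)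

lemma subordinationConst_pos (hγ0 : 0 < γ) (hγ1 : γ < 1) : 0 < subordinationConst γ := by
  have hint := integrableOn_rpow_mul_one_sub_exp hγ0 hγ1 zero_le_one
  simp only [one_mul] at hint
  have hexp : 0 < 1 - exp (-1) := by simp
  calc 0 < (1 - exp (-1)) * (1 ^ (-γ) / γ) := by rw [one_rpow]; positivity
    _ ≤ subordinationConst γ := by
      refine mul_rpow_div_le_setIntegral hγ0 one_pos hint (fun s hs => ?_) fun s hs => ?_
      · simpa using hs.le
      · gcongr

/-- The linear functional `∑ₘ qₘ xᵐ ↦ ∑ₘ mᵞ qₘ`, i.e. the value at `x = 1` of the fractional power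
`(x d/dx)ᵞ` of the Euler operator. -/
def fracEuler (γ : ℝ) : ℝ[X] →ₗ[ℝ] ℝ :=
  lsum fun m => (m : ℝ) ^ γ • LinearMap.id

lemma fracEuler_monomial (m : ℕ) (c : ℝ) : fracEuler γ (monomial m c) = (m : ℝ) ^ γ * c := by
  simp [fracEuler, lsum_apply, sum_monomial_index]

lemma integrableOn_and_integral_eval_one_sub_eval_exp (hγ0 : 0 < γ) (hγ1 : γ < 1) (q : ℝ[X]) :
    IntegrableOn (fun s : ℝ => s ^ (-γ - 1) * (q.eval 1 - q.eval (exp (-s)))) (Set.Ioi 0) ∧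
      ∫ s in Set.Ioi (0 : ℝ), s ^ (-γ - 1) * (q.eval 1 - q.eval (exp (-s))) =
        subordinationConst γ * fracEuler γ q := by
  induction q using Polynomial.induction_on' with
  | add p q hp hq =>
    simp only [eval_add, add_sub_add_comm, mul_add, map_add]
    exact ⟨hp.1.add hq.1, by rw [integral_add hp.1 hq.1, hp.2, hq.2]⟩
  | monomial m c =>
    have hint := integrableOn_rpow_mul_one_sub_exp hγ0 hγ1 m.cast_nonneg
    have hval := integral_rpow_mul_one_sub_exp hγ0.ne' (m.cast_nonneg (α := ℝ))
    have hterm (s : ℝ) : s ^ (-γ - 1) * ((monomial m c).eval 1 - (monomial m c).eval (exp (-s))) =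
        c * (s ^ (-γ - 1) * (1 - exp (-(m * s)))) := by
      rw [eval_monomial, eval_monomial, one_pow, ← exp_nat_mul, mul_neg]
      ring
    simp only [hterm, fracEuler_monomial]
    exact ⟨hint.const_mul c, by rw [integral_const_mul, hval]; ring⟩

lemma log_eight_mul_sq_le {x : ℝ} (hx : 1 ≤ x) : log (8 * x ^ 2) ≤ 3 * (1 + log x) := by
  have hlog8 : log 8 ≤ 3 := by
    rw [show (8 : ℝ) = 2 ^ 3 by norm_num, log_pow]
    norm_num
    linarith [log_two_lt_d9]
  rw [log_mul (by norm_num) (by positivity), log_pow]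
  push_cast
  linarith [log_nonneg hx]

lemma abs_eval_exp_neg_le_half {q : ℝ[X]} {k : ℕ} {M s : ℝ} (hk : 1 ≤ k) (hdeg : q.degree ≤ k)
    (h0 : q.eval 0 = 0) (hq : ∀ x ∈ Set.Icc 0 1, |q.eval x| ≤ M) (hs : log (8 * k ^ 2) ≤ s) :
    |q.eval (exp (-s))| ≤ M / 2 := by
  have hk1 : (1 : ℝ) ≤ k := by exact_mod_cast hk
  have hk8 : 8 ≤ 8 * (k : ℝ) ^ 2 := by nlinarith
  have hM : 0 ≤ M := (abs_nonneg _).trans (hq 0 (by simp))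
  have hexp : exp (-s) ≤ 1 / (8 * k ^ 2) := by
    rw [one_div, exp_neg]
    exact inv_anti₀ (by linarith) ((log_le_iff_le_exp (by linarith)).mp hs)
  have hhalf : 1 / (8 * (k : ℝ) ^ 2) ≤ 1 / 2 := by gcongr; linarith
  calc |q.eval (exp (-s))| ≤ 4 * k ^ 2 * M * exp (-s) :=
        abs_eval_le_mul_of_eval_zero_eq_zero hdeg h0 hq ⟨(exp_pos _).le, hexp.trans hhalf⟩
    _ ≤ 4 * k ^ 2 * M * (1 / (8 * k ^ 2)) := by gcongr
    _ = M / 2 := by field_simp; ring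

lemma mul_eval_one_le_fracEuler {q : ℝ[X]} {k : ℕ} (hγ0 : 0 < γ) (hγ1 : γ < 1)
    (hk : 1 ≤ k) (hdeg : q.degree ≤ k) (h0 : q.eval 0 = 0)
    (hq : ∀ x ∈ Set.Icc 0 1, |q.eval x| ≤ q.eval 1) :
    3 ^ (-γ) / (2 * γ * subordinationConst γ) * (1 + log k) ^ (-γ) * q.eval 1 ≤
      fracEuler γ q := by
  obtain ⟨hint, hval⟩ := integrableOn_and_integral_eval_one_sub_eval_exp hγ0 hγ1 q
  have hc := subordinationConst_pos hγ0 hγ1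
  have hk1 : (1 : ℝ) ≤ k := by exact_mod_cast hk
  have hlog : 0 < 1 + log k := by linarith [log_nonneg hk1]
  have hlower : q.eval 1 / 2 * ((3 * (1 + log k)) ^ (-γ) / γ) ≤
      subordinationConst γ * fracEuler γ q := by
    rw [← hval]
    refine mul_rpow_div_le_setIntegral hγ0 (by positivity) hint (fun s hs => ?_) fun s hs => ?_
    · have hexp : exp (-s) ≤ 1 := exp_le_one_iff.mpr (by linarith)
      exact sub_nonneg.mpr ((le_abs_self _).trans (hq _ ⟨(exp_pos _).le, hexp⟩))
    · have hhalf := abs_eval_exp_neg_le_half hk hdeg h0 hq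
        ((log_eight_mul_sq_le hk1).trans hs.le)
      linarith [le_abs_self (q.eval (exp (-s)))]
  rw [mul_rpow (by norm_num) hlog.le, ← div_le_iff₀' hc] at hlower
  calc _ = q.eval 1 / 2 * (3 ^ (-γ) * (1 + log k) ^ (-γ) / γ) / subordinationConst γ := by
        field_simp
    _ ≤ _ := hlower

end Subordination

section Expectation

open scoped BigOperators

lemma abs_realSign_le_one (a : ℝ) : |Real.sign a| ≤ 1 := by
  rcases sign_apply_eq a with h | h | h <;> simp [h]

lemma realSign_mul_self (a : ℝ) : Real.sign a * a = |a| := by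
  rcases lt_trichotomy a 0 with h | rfl | h
  · rw [sign_of_neg h, abs_of_neg h, neg_one_mul]
  · simp
  · rw [sign_of_pos h, abs_of_pos h, one_mul]

variable {n : ℕ}

lemma pNorm_one (f : (Fin n → Bool) → ℝ) : pNorm 1 f = cubeE fun x => |f x| := by
  simp [pNorm]

lemma pNorm_nonneg (p : ℝ) (f : (Fin n → Bool) → ℝ) : 0 ≤ pNorm p f :=
  rpow_nonneg (div_nonneg (sum_nonneg fun _ _ => rpow_nonneg (abs_nonneg _) _) (by positivity)) _

lemma exists_norming_function (f g : (Fin n → Bool) → ℝ) :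
    ∃ h : (Fin n → Bool) → ℝ, (∀ x, |h x| ≤ 1) ∧ (∀ x, h x * f x = |f x|) ∧
      cubeE (fun x => h x * -g x) =
        cubeE (fun x => -g x * Real.sign (f x) * (if f x ≠ 0 then 1 else 0)) -
          cubeE (fun x => |g x| * (if f x = 0 then 1 else 0)) := by
  refine ⟨fun x => if f x = 0 then Real.sign (g x) else Real.sign (f x),
    fun x => ?_, fun x => ?_, ?_⟩
  · dsimp only
    split_ifs <;> exact abs_realSign_le_one _
  · by_cases hx : f x = 0
    · simp [hx]
    · simp [hx, realSign_mul_self]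
  · simp only [cubeE_eq_expect, ← expect_sub_distrib]
    refine expect_congr rfl fun x _ => ?_
    by_cases hx : f x = 0
    · simp [hx, realSign_mul_self]
    · simp [hx, mul_comm]

end Expectation

section Noise

open scoped BigOperators

variable {n : ℕ} {ρ : ℝ}

/-- The noise operator `T_ρ f = ∑_S ρ^|S| f̂(S) x^S`; it is `heat1 t` for `ρ = e^{-t}`, but also
makes sense at `ρ = 0`, which corresponds to `t = ∞`. -/
def noise (ρ : ℝ) (f : (Fin n → Bool) → ℝ) (x : Fin n → Bool) : ℝ :=
  ∑ S : Finset (Fin n), ρ ^ S.card * cubeFourier f S * walsh S x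

/-- The kernel `∏ᵢ (1 + ρ xᵢ yᵢ)` of the noise operator `T_ρ` with respect to the uniform
probability measure. -/
def noiseKernel (ρ : ℝ) (x y : Fin n → Bool) : ℝ :=
  ∏ i, if x i = y i then 1 + ρ else 1 - ρ

lemma noiseKernel_nonneg (hρ : |ρ| ≤ 1) (x y : Fin n → Bool) : 0 ≤ noiseKernel ρ x y := by
  obtain ⟨h₁, h₂⟩ := abs_le.mp hρ
  exact prod_nonneg fun i _ => by split_ifs <;> linarith

lemma cubeE_noiseKernel (ρ : ℝ) (y : Fin n → Bool) : cubeE (fun x => noiseKernel ρ x y) = 1 := by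
  have hfactor (b : Bool) : ∑ a : Bool, (if a = b then 1 + ρ else 1 - ρ) = 2 := by
    cases b <;> simp <;> ring
  simp only [cubeE, noiseKernel]
  rw [← Fintype.prod_sum fun i a => if a = y i then 1 + ρ else 1 - ρ]
  simp only [hfactor, prod_const, card_univ, Fintype.card_fin]
  exact div_self (by positivity)

lemma noiseKernel_one (x y : Fin n → Bool) :
    noiseKernel 1 x y = if x = y then 2 ^ n else 0 := by
  split_ifs with hxy
  · norm_num [noiseKernel, hxy]
  · obtain ⟨i, hi⟩ := Function.ne_iff.mp hxy
    exact prod_eq_zero (mem_univ i) (by simp [hi])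

lemma sum_pow_card_mul_walsh_mul_walsh (ρ : ℝ) (x y : Fin n → Bool) :
    ∑ S : Finset (Fin n), ρ ^ S.card * walsh S x * walsh S y = noiseKernel ρ x y := by
  have hfactor (i : Fin n) : (if x i = y i then 1 + ρ else 1 - ρ) =
      1 + ρ * (if x i then 1 else -1) * (if y i then 1 else -1) := by
    cases x i <;> cases y i <;> simp [sub_eq_add_neg]
  simp only [noiseKernel, hfactor, prod_one_add, powerset_univ, prod_mul_distrib, prod_const, walsh]

lemma cubeE_mul_sum_walsh (h : (Fin n → Bool) → ℝ) (a : Finset (Fin n) → ℝ) :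
    cubeE (fun x => h x * ∑ S, a S * walsh S x) = ∑ S, a S * cubeFourier h S := by
  simp only [cubeFourier, cubeE_eq_expect, mul_sum, expect_sum_comm, mul_expect,
    mul_left_comm]

lemma noise_eq_cubeE (ρ : ℝ) (f : (Fin n → Bool) → ℝ) (x : Fin n → Bool) :
    noise ρ f x = cubeE fun y => f y * noiseKernel ρ x y := by
  simp only [← sum_pow_card_mul_walsh_mul_walsh, cubeE_mul_sum_walsh, noise, mul_right_comm]

lemma noise_one (f : (Fin n → Bool) → ℝ) : noise 1 f = f := by
  ext x
  simp [noise_eq_cubeE, noiseKernel_one, cubeE]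

lemma cubeE_abs_noise_le (hρ : |ρ| ≤ 1) (f : (Fin n → Bool) → ℝ) :
    cubeE (fun x => |noise ρ f x|) ≤ cubeE fun x => |f x| := by
  have hmass := cubeE_noiseKernel (n := n) ρ
  simp only [noise_eq_cubeE, cubeE_eq_expect] at hmass ⊢
  calc 𝔼 x, |𝔼 y, f y * noiseKernel ρ x y|
      ≤ 𝔼 x, 𝔼 y, |f y| * noiseKernel ρ x y := by
        refine expect_le_expect fun x _ => (abs_expect_le _ _).trans_eq ?_
        simp only [abs_mul, abs_of_nonneg (noiseKernel_nonneg hρ x _)]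
    _ = 𝔼 y, |f y| * 𝔼 x, noiseKernel ρ x y := by
        rw [expect_comm]
        simp only [mul_expect]
    _ = 𝔼 y, |f y| := by simp only [hmass, mul_one]

end Noise

section NoisePolynomial

open Polynomial

variable {n : ℕ}

/-- The polynomial `ρ ↦ E[h · T_ρ f]`, see `eval_noisePolynomial`. -/
def noisePolynomial (f h : (Fin n → Bool) → ℝ) : ℝ[X] :=
  ∑ S : Finset (Fin n), monomial S.card (cubeFourier f S * cubeFourier h S)

lemma eval_noisePolynomial (f h : (Fin n → Bool) → ℝ) (ρ : ℝ) :
    (noisePolynomial f h).eval ρ = cubeE fun x => h x * noise ρ f x := by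
  simp only [noisePolynomial, noise, cubeE_mul_sum_walsh, eval_finsetSum, eval_monomial]
  exact sum_congr rfl fun S _ => by ring

lemma fracEuler_noisePolynomial (γ : ℝ) (f h : (Fin n → Bool) → ℝ) :
    fracEuler γ (noisePolynomial f h) = cubeE fun x => h x * -fracLap γ f x := by
  simp only [noisePolynomial, fracLap, neg_neg, cubeE_mul_sum_walsh, map_sum, fracEuler_monomial]
  exact sum_congr rfl fun S _ => by ring

lemma degree_noisePolynomial_le {f : (Fin n → Bool) → ℝ} {k : ℕ}
    (hf : ∀ S : Finset (Fin n), k < S.card → cubeFourier f S = 0) (h : (Fin n → Bool) → ℝ) :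
    (noisePolynomial f h).degree ≤ k := by
  refine (degree_sum_le _ _).trans (Finset.sup_le fun S _ => ?_)
  rcases le_or_gt S.card k with hS | hS
  · exact (degree_monomial_le _ _).trans (by exact_mod_cast hS)
  · simp [hf S hS]

lemma eval_zero_noisePolynomial {f : (Fin n → Bool) → ℝ} (hf : cubeFourier f ∅ = 0)
    (h : (Fin n → Bool) → ℝ) : (noisePolynomial f h).eval 0 = 0 := by
  simp only [noisePolynomial, eval_finsetSum, eval_monomial]
  refine sum_eq_zero fun S _ => ?_
  rcases S.eq_empty_or_nonempty with rfl | hS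
  · simp [hf]
  · simp [hS.card_ne_zero]

lemma eval_one_noisePolynomial {f h : (Fin n → Bool) → ℝ} (hf : ∀ x, h x * f x = |f x|) :
    (noisePolynomial f h).eval 1 = pNorm 1 f := by
  simp only [eval_noisePolynomial, noise_one, hf, pNorm_one]

lemma abs_eval_noisePolynomial_le {f h : (Fin n → Bool) → ℝ} (hh : ∀ x, |h x| ≤ 1) {ρ : ℝ}
    (hρ : |ρ| ≤ 1) : |(noisePolynomial f h).eval ρ| ≤ pNorm 1 f := by
  calc |(noisePolynomial f h).eval ρ| ≤ cubeE fun x => |noise ρ f x| := by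
        rw [eval_noisePolynomial, cubeE_eq_expect, cubeE_eq_expect]
        refine (abs_expect_le _ _).trans (expect_le_expect fun x _ => ?_)
        rw [abs_mul]
        exact mul_le_of_le_one_left (abs_nonneg _) (hh x)
    _ ≤ pNorm 1 f := (cubeE_abs_noise_le hρ f).trans_eq (pNorm_one f).symm

end NoisePolynomial

lemma rpow_neg_mul_three_rpow_le {γ x : ℝ} (hγ : 0 ≤ γ) (hx : 1 ≤ x) :
    x ^ (-γ) * 3 ^ (-(3 * x)) ≤ (1 + log x) ^ (-γ) := by
  have hlog : 1 + log x ≤ x := by linarith [log_le_sub_one_of_pos (one_pos.trans_le hx)]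
  calc x ^ (-γ) * 3 ^ (-(3 * x)) ≤ x ^ (-γ) := by
        refine mul_le_of_le_one_right (by positivity) ?_
        exact rpow_le_one_of_one_le_of_nonpos (by norm_num) (by linarith)
    _ ≤ (1 + log x) ^ (-γ) :=
        rpow_le_rpow_of_nonpos (by linarith [log_nonneg hx]) hlog (by linarith)

theorem stmt10_general (γ : ℝ) (hγ0 : 0 < γ) (hγ1 : γ < 1) :
    ∃ b : ℝ, 0 < b ∧
      ∀ (n k : ℕ), 1 ≤ k →
        ∀ f : (Fin n → Bool) → ℝ,
          cubeFourier f ∅ = 0 →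
          (∀ S : Finset (Fin n), k < S.card → cubeFourier f S = 0) →
          b * (1 + log k) ^ (-γ) * pNorm 1 f ≤
            cubeE (fun x => -fracLap γ f x * Real.sign (f x) * (if f x ≠ 0 then 1 else 0)) -
              cubeE (fun x => |fracLap γ f x| * (if f x = 0 then 1 else 0)) := by
  have hc := subordinationConst_pos hγ0 hγ1
  refine ⟨3 ^ (-γ) / (2 * γ * subordinationConst γ), by positivity, fun n k hk f hf0 hfk => ?_⟩
  obtain ⟨h, hh, hhf, hdual⟩ := exists_norming_function f (fracLap γ f)
  have hone := eval_one_noisePolynomial hhf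
  rw [← hdual, ← fracEuler_noisePolynomial, ← hone]
  refine mul_eval_one_le_fracEuler hγ0 hγ1 hk (degree_noisePolynomial_le hfk h)
    (eval_zero_noisePolynomial hf0 h) fun ρ hρ => ?_
  rw [hone]
  exact abs_eval_noisePolynomial_le hh (abs_le.mpr ⟨by linarith [hρ.1], hρ.2⟩)

/-- Poincaré inequality with the fractional Laplacian in `L¹`: for `0 < γ < 1`
there is `b_γ > 0` independent of `n` and `k` such that for every `n`, `k ≥ 1`,
and every `f : C_n → ℝ` with `f̂(∅) = 0` and `f̂(S) = 0` for `|S| > k`,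
`b_γ k^{-γ} 3^{-3k} ‖f‖₁ ≤ E[(-Δ_γ f) sgn f 1_{f≠0}] - E[|Δ_γ f| 1_{f=0}]`. -/
theorem stmt10 (γ : ℝ) (hγ0 : 0 < γ) (hγ1 : γ < 1) :
    ∃ b : ℝ, 0 < b ∧
      ∀ (n k : ℕ), 1 ≤ k →
        ∀ f : (Fin n → Bool) → ℝ,
          cubeFourier f ∅ = 0 →
          (∀ S : Finset (Fin n), k < S.card → cubeFourier f S = 0) →
          b * (k : ℝ) ^ (-γ) * (3 : ℝ) ^ (-(3 * (k : ℝ))) * pNorm 1 f ≤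
            cubeE (fun x => -fracLap γ f x * Real.sign (f x) * (if f x ≠ 0 then 1 else 0)) -
              cubeE (fun x => |fracLap γ f x| * (if f x = 0 then 1 else 0)) := by
  obtain ⟨b, hb, hbound⟩ := stmt10_general γ hγ0 hγ1
  refine ⟨b, hb, fun n k hk f hf0 hfk => le_trans ?_ (hbound n k hk f hf0 hfk)⟩
  rw [mul_assoc b]
  gcongr
  exacts [pNorm_nonneg 1 f, rpow_neg_mul_three_rpow_le hγ0.le (by exact_mod_cast hk)]
end
end

section
/- Let 0 < γ < 1. There exists a function p_γ : ℝ → ℝ with the following properties: (i) p_γ ≥ 0 everywhere and p_γ(τ) = 0 for all τ ≤ 0; (ii) ∫_ℝ p_γ(τ) dτ = 1; (iii) p_γ is infinitely differentiable with bounded derivatives of all orders; (iv) lim_{τ→∞} τ^{1+γ} p_γ(τ) = C_γ, where C_γ is determined by 1/C_γ = ∫₀^∞ (1 − e^{−τ}) τ^{−(1+γ)} dτ; and (v) for every λ ≥ 0, e^{−λ^γ} = ∫₀^∞ e^{−λτ} p_γ(τ) dτ. -/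
open MeasureTheory Real Filter

open Complex (I)
open scoped Topology FourierTransform ComplexConjugate

/-!
The density is the inverse Fourier transform of `exp (-(2πiv) ^ γ)`. In the logarithmic variable
`w = log z` the inversion integral runs along the horizontal line `Im w = π / 2`. For `τ ≤ 0` the
contour may be lowered to the real axis, where the integrand is real, so the density vanishes. For
`τ > 0` it may be raised into `Im w > π / 2`, where `exp (τ z)` decays and a first-order expansion
in `τ ^ (-γ)` gives the tail, with constant `Γ(1 + γ) sin(πγ) / π`. The tail makes the density
integrable; its Laplace transform is then bounded on the right half-plane and agrees with
`exp (-z ^ γ)` on the imaginary axis, hence everywhere by Phragmén–Lindelöf.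

For positivity, `x ↦ exp (-(-x) ^ γ)` is absolutely monotone on `(-∞, 0)`, and so are its backward
differences. Therefore all integrals of `(1 - e^{-τ}) ^ k * e^{-(n + 1) τ}` against the density are
nonnegative. By Bernstein approximation the same holds for `φ (e^{-τ}) * e^{-τ}` with any continuous
`φ ≥ 0`, which forces the density to be nonnegative.
-/

section LogarithmicCoordinates

variable {E : Type*} [NormedAddCommGroup E] [NormedSpace ℝ E]

lemma integral_exp_smul_comp_exp (f : ℝ → E) :
    ∫ x, exp x • f (exp x) = ∫ t in Set.Ioi 0, f t := by
  have h := integral_image_eq_integral_abs_deriv_smul MeasurableSet.univ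
    (fun x _ ↦ (hasDerivAt_exp x).hasDerivWithinAt) exp_injective.injOn f
  simpa only [Set.image_univ, range_exp, abs_exp, setIntegral_univ] using h.symm

lemma integrable_exp_smul_comp_exp_iff (f : ℝ → E) :
    Integrable (fun x ↦ exp x • f (exp x)) ↔ IntegrableOn f (Set.Ioi 0) := by
  have h := integrableOn_image_iff_integrableOn_abs_deriv_smul MeasurableSet.univ
    (fun x _ ↦ (hasDerivAt_exp x).hasDerivWithinAt) exp_injective.injOn f
  simpa only [Set.image_univ, range_exp, abs_exp, integrableOn_univ] using h.symm

variable {a b c : ℝ}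

lemma integrable_exp_mul_sub_mul_exp (ha : 0 < a) (hb : 0 < b) (hc : 0 < c) :
    Integrable fun x ↦ exp (a * x - c * exp (b * x)) := by
  have h := (integrable_exp_smul_comp_exp_iff _).2
    (integrableOn_rpow_mul_exp_neg_mul_rpow (s := a - 1) (by linarith) hb hc)
  refine h.congr (ae_of_all _ fun x ↦ ?_)
  simp only [smul_eq_mul, ← exp_mul, ← exp_add]
  ring_nf

lemma tendsto_exp_mul_sub_mul_exp_cocompact (ha : 0 < a) (hb : 0 < b) (hc : 0 < c) :
    Tendsto (fun x ↦ exp (a * x - c * exp (b * x))) (cocompact ℝ) (𝓝 0) := by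
  rw [cocompact_eq_atBot_atTop]
  refine Tendsto.sup ?_ ?_
  · refine squeeze_zero (fun x ↦ (exp_pos _).le) (fun x ↦ exp_le_exp.2 ?_)
      (tendsto_exp_atBot.comp (tendsto_id.const_mul_atBot ha))
    exact sub_le_self _ (by positivity)
  · have h := (tendsto_rpow_mul_exp_neg_mul_atTop_nhds_zero (a / b) c hc).comp
      (tendsto_exp_atTop.comp (tendsto_id.const_mul_atTop hb))
    refine h.congr fun x ↦ ?_
    simp only [Function.comp_apply, id_eq, ← exp_mul, ← exp_add]
    congr 1
    field_simp
    ring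

end LogarithmicCoordinates

section ContourShift

variable {E : Type*} [NormedAddCommGroup E]

lemma tendsto_intervalIntegral_of_norm_le [NormedSpace ℝ E] {F : ℝ → ℝ → E} {g : ℝ → ℝ}
    {A B : ℝ} {l : Filter ℝ}
    (hg : Tendsto g l (𝓝 0)) (hF : ∀ x, ∀ y ∈ Set.uIcc A B, ‖F x y‖ ≤ g x) :
    Tendsto (fun x ↦ ∫ y in A..B, F x y) l (𝓝 0) := by
  refine squeeze_zero_norm (fun x ↦ ?_) (by simpa using hg.mul_const |B - A|)
  exact intervalIntegral.norm_integral_le_of_norm_le_const fun y hy ↦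
    hF x y (Set.uIoc_subset_uIcc hy)

theorem integral_horizontal_line_eq [NormedSpace ℂ E] {f : ℂ → E} {g : ℝ → ℝ}
    {A B : ℝ} (hf : DifferentiableOn ℂ f (Complex.im ⁻¹' Set.uIcc A B))
    (hg : Integrable g) (hg₀ : Tendsto g (cocompact ℝ) (𝓝 0))
    (hfg : ∀ x : ℝ, ∀ y ∈ Set.uIcc A B, ‖f (x + y * I)‖ ≤ g x) :
    ∫ x : ℝ, f (x + A * I) = ∫ x : ℝ, f (x + B * I) := by
  have hint : ∀ y ∈ Set.uIcc A B, Integrable fun x : ℝ ↦ f (x + y * I) := fun y hy ↦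
    hg.mono' (hf.continuousOn.comp_continuous (by fun_prop)
      (by simpa using hy)).aestronglyMeasurable (ae_of_all _ (hfg · y hy))
  have hhor : ∀ y ∈ Set.uIcc A B, Tendsto (fun R ↦ ∫ x : ℝ in (-R)..R, f (x + y * I)) atTop
      (𝓝 (∫ x : ℝ, f (x + y * I))) := fun y hy ↦
    intervalIntegral_tendsto_integral (hint y hy) tendsto_neg_atTop_atBot tendsto_id
  have hvert := tendsto_intervalIntegral_of_norm_le hg₀ hfg
  rw [cocompact_eq_atBot_atTop, tendsto_sup] at hvert
  have hrect : ∀ R : ℝ, (∫ x : ℝ in (-R)..R, f (x + A * I)) -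
      (∫ x : ℝ in (-R)..R, f (x + B * I)) + I • (∫ y : ℝ in A..B, f (R + y * I)) -
      I • (∫ y : ℝ in A..B, f ((-R : ℝ) + y * I)) = 0 := fun R ↦ by
    simpa using Complex.integral_boundary_rect_eq_zero_of_differentiableOn f ⟨-R, A⟩ ⟨R, B⟩
      (hf.mono fun z hz ↦ by simpa using hz.2)
  have hlim := (((hhor A Set.left_mem_uIcc).sub (hhor B Set.right_mem_uIcc)).add
    (hvert.2.const_smul I)).sub ((hvert.1.comp tendsto_neg_atTop_atBot).const_smul I)
  have h := tendsto_nhds_unique (hlim.congr hrect) tendsto_const_nhds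
  simpa only [smul_zero, add_zero, sub_zero, sub_eq_zero] using h

end ContourShift

section AbsoluteMonotonicity

open scoped ContDiff

variable {f g h : ℝ → ℝ} {s : Set ℝ}

lemma absolutelyMonotoneOn_congr (hf : AbsolutelyMonotoneOn f s) (hfg : Set.EqOn g f s) :
    AbsolutelyMonotoneOn g s :=
  let ⟨p, hp, hp₀⟩ := hf
  ⟨p, hp.congr hfg, hp₀⟩

lemma absolutelyMonotoneOn_of_derivWithin_eq_mul (hs : UniqueDiffOn ℝ s)
    (hg : ContDiffOn ℝ ∞ g s) (hg₀ : ∀ x ∈ s, 0 ≤ g x) (hh : AbsolutelyMonotoneOn h s)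
    (hgh : ∀ x ∈ s, derivWithin g s x = h x * g x) : AbsolutelyMonotoneOn g s := by
  refine (AbsolutelyMonotoneOn.iff_iteratedDerivWithin_nonneg hs).2 ⟨hg, fun n ↦ ?_⟩
  induction n using Nat.strong_induction_on with | _ n ih
  rcases n with - | n
  · simpa only [iteratedDerivWithin_zero] using hg₀
  intro x hx
  have hn : (n : WithTop ℕ∞) ≤ ∞ := mod_cast le_top
  rw [iteratedDerivWithin_succ', iteratedDerivWithin_congr hgh hx,
    ← Pi.mul_def, iteratedDerivWithin_mul hx hs ((hh.contDiffOn x hx).of_le hn)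
      ((hg x hx).of_le hn)]
  refine Finset.sum_nonneg fun i _ ↦ mul_nonneg (mul_nonneg (Nat.cast_nonneg _) ?_) ?_
  · exact hh.iteratedDerivWithin_nonneg hs i hx
  · exact ih (n - i) (by lia) x hx

lemma absolutelyMonotoneOn_neg_rpow {a : ℝ} (ha : a ≤ 0) :
    AbsolutelyMonotoneOn (fun x ↦ (-x) ^ a) (Set.Iio 0) := by
  refine (AbsolutelyMonotoneOn.iff_iteratedDerivWithin_nonneg (uniqueDiffOn_Iio 0)).2
    ⟨fun x hx ↦ (contDiffAt_id.neg.rpow_const_of_ne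
      (neg_ne_zero.2 (ne_of_lt hx))).contDiffWithinAt, fun n ↦ ?_⟩
  induction n generalizing a with
  | zero =>
    intro x hx
    simpa only [iteratedDerivWithin_zero] using rpow_nonneg (neg_nonneg.2 (le_of_lt hx)) a
  | succ n ih =>
    intro x hx
    have hderiv : Set.EqOn (derivWithin (fun x ↦ (-x) ^ a) (Set.Iio 0))
        (fun x ↦ -a * (-x) ^ (a - 1)) (Set.Iio 0) := fun y hy ↦ by
      have hd := (hasDerivAt_neg y).rpow_const (p := a) (.inl (neg_ne_zero.2 (ne_of_lt hy)))
      rw [hd.hasDerivWithinAt.derivWithin (uniqueDiffOn_Iio 0 y hy)]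
      ring
    rw [iteratedDerivWithin_succ', iteratedDerivWithin_congr hderiv hx,
      iteratedDerivWithin_const_mul_field]
    exact mul_nonneg (neg_nonneg.2 ha) (ih (by linarith) x hx)

lemma absolutelyMonotoneOn_exp_neg_neg_rpow {γ : ℝ} (hγ₀ : 0 ≤ γ) (hγ₁ : γ ≤ 1) :
    AbsolutelyMonotoneOn (fun x ↦ exp (-(-x) ^ γ)) (Set.Iio 0) := by
  refine absolutelyMonotoneOn_of_derivWithin_eq_mul (uniqueDiffOn_Iio 0)
    (fun x hx ↦ ((contDiffAt_id.neg.rpow_const_of_ne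
      (neg_ne_zero.2 (ne_of_lt hx))).neg.exp).contDiffWithinAt)
    (fun x _ ↦ (exp_pos _).le)
    ((absolutelyMonotoneOn_neg_rpow (sub_nonpos.2 hγ₁)).smul hγ₀) fun x hx ↦ ?_
  have hd : HasDerivAt (fun x ↦ exp (-(-x) ^ γ)) _ x :=
    ((hasDerivAt_neg x).rpow_const (p := γ) (.inl (neg_ne_zero.2 (ne_of_lt hx)))).neg.exp
  rw [hd.hasDerivWithinAt.derivWithin (uniqueDiffOn_Iio 0 x hx)]
  simp only [Pi.neg_apply, Pi.smul_apply, smul_eq_mul]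
  ring

lemma monotoneOn_iteratedDerivWithin_of_absolutelyMonotoneOn (hs : Convex ℝ s) (hso : IsOpen s)
    (hf : AbsolutelyMonotoneOn f s) (n : ℕ) : MonotoneOn (iteratedDerivWithin n f s) s := by
  have hd : DifferentiableOn ℝ (iteratedDerivWithin n f s) s :=
    hf.contDiffOn.differentiableOn_iteratedDerivWithin (mod_cast WithTop.coe_lt_top _)
      hso.uniqueDiffOn
  refine monotoneOn_of_hasDerivWithinAt_nonneg hs hd.continuousOn
    (f' := iteratedDerivWithin (n + 1) f s) (fun x hx ↦ ?_) fun x hx ↦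
      hf.iteratedDerivWithin_nonneg hso.uniqueDiffOn _ (interior_subset hx)
  rw [hso.interior_eq] at hx ⊢
  rw [iteratedDerivWithin_succ]
  exact (hd x hx).hasDerivWithinAt

lemma absolutelyMonotoneOn_sub_comp_sub_const {a c : ℝ} (hf : AbsolutelyMonotoneOn f (Set.Iio a))
    (hc : 0 ≤ c) : AbsolutelyMonotoneOn (fun x ↦ f x - f (x - c)) (Set.Iio a) := by
  have hmem : ∀ x ∈ Set.Iio a, x - c ∈ Set.Iio a := fun x hx ↦ (sub_le_self x hc).trans_lt hx
  have hdiff : ∀ x ∈ Set.Iio a, ContDiffAt ℝ ∞ f x := fun x hx ↦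
    hf.contDiffOn.contDiffAt (Iio_mem_nhds hx)
  have hshift : ∀ x ∈ Set.Iio a, ContDiffAt ℝ ∞ (fun y ↦ f (y - c)) x := fun x hx ↦
    (hdiff _ (hmem x hx)).comp x (contDiffAt_id.sub contDiffAt_const)
  refine (AbsolutelyMonotoneOn.iff_iteratedDerivWithin_nonneg (uniqueDiffOn_Iio a)).2
    ⟨fun x hx ↦ ((hdiff x hx).sub (hshift x hx)).contDiffWithinAt, fun n x hx ↦ ?_⟩
  have hn : (n : WithTop ℕ∞) ≤ ∞ := mod_cast le_top
  have h := monotoneOn_iteratedDerivWithin_of_absolutelyMonotoneOn (convex_Iio a) isOpen_Iio hf n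
    (hmem x hx) hx (sub_le_self x hc)
  rw [iteratedDerivWithin_of_isOpen isOpen_Iio hx, iteratedDerivWithin_of_isOpen isOpen_Iio
    (hmem x hx)] at h
  rwa [iteratedDerivWithin_of_isOpen isOpen_Iio hx, iteratedDeriv_fun_sub
    ((hdiff x hx).of_le hn) ((hshift x hx).of_le hn), iteratedDeriv_comp_sub_const, sub_nonneg]

end AbsoluteMonotonicity

section LaplaceAbsolutelyMonotone

open scoped unitInterval

variable {f : ℝ → ℝ}

lemma one_sub_exp_neg_nonneg {τ : ℝ} (hτ : 0 ≤ τ) : 0 ≤ 1 - exp (-τ) :=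
  sub_nonneg.2 (exp_le_one_iff.2 (neg_nonpos.2 hτ))

lemma integrableOn_one_sub_exp_neg_pow_mul_exp_mul (hf : IntegrableOn f (Set.Ioi 0)) (k : ℕ)
    {x : ℝ} (hx : x ≤ 0) :
    IntegrableOn (fun τ ↦ (1 - exp (-τ)) ^ k * exp (x * τ) * f τ) (Set.Ioi 0) := by
  refine hf.bdd_mul (c := 1) (by fun_prop) (ae_restrict_of_forall_mem measurableSet_Ioi ?_)
  intro τ (hτ : 0 < τ)
  have h₀ : 0 ≤ 1 - exp (-τ) := one_sub_exp_neg_nonneg hτ.le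
  rw [norm_of_nonneg (by positivity)]
  exact mul_le_one₀ (pow_le_one₀ h₀ (sub_le_self 1 (exp_pos _).le)) (exp_pos _).le
    (exp_le_one_iff.2 (mul_nonpos_of_nonpos_of_nonneg hx hτ.le))

lemma absolutelyMonotoneOn_integral_one_sub_exp_neg_pow (hf : IntegrableOn f (Set.Ioi 0))
    (h : AbsolutelyMonotoneOn (fun x ↦ ∫ τ in Set.Ioi 0, exp (x * τ) * f τ) (Set.Iio 0)) (k : ℕ) :
    AbsolutelyMonotoneOn (fun x ↦ ∫ τ in Set.Ioi 0, (1 - exp (-τ)) ^ k * exp (x * τ) * f τ)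
      (Set.Iio 0) := by
  induction k with
  | zero => simpa only [pow_zero, one_mul] using h
  | succ k ih =>
    -- Multiplying the density by `1 - e^{-τ}` replaces the transform `F` by `F x - F (x - 1)`.
    refine absolutelyMonotoneOn_congr (absolutelyMonotoneOn_sub_comp_sub_const ih zero_le_one)
      fun x (hx : x < 0) ↦ ?_
    rw [← integral_sub (integrableOn_one_sub_exp_neg_pow_mul_exp_mul hf k hx.le)
      (integrableOn_one_sub_exp_neg_pow_mul_exp_mul hf k (by linarith))]
    congr with τ
    rw [sub_mul x, one_mul, sub_eq_add_neg (x * τ), exp_add]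
    ring

lemma integral_one_sub_exp_neg_pow_mul_exp_neg_pow_nonneg (hf : IntegrableOn f (Set.Ioi 0))
    (h : AbsolutelyMonotoneOn (fun x ↦ ∫ τ in Set.Ioi 0, exp (x * τ) * f τ) (Set.Iio 0))
    (k n : ℕ) :
    0 ≤ ∫ τ in Set.Ioi 0, (1 - exp (-τ)) ^ k * exp (-τ) ^ (n + 1) * f τ := by
  have hn : -((n + 1 : ℕ) : ℝ) < 0 := neg_lt_zero.2 (Nat.cast_pos.2 n.succ_pos)
  have h₀ := (absolutelyMonotoneOn_integral_one_sub_exp_neg_pow hf h k).iteratedDerivWithin_nonneg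
    (uniqueDiffOn_Iio 0) 0 hn
  simp only [iteratedDerivWithin_zero] at h₀
  simpa only [← exp_nat_mul, mul_neg, neg_mul] using h₀

lemma projIcc_exp_neg {τ : ℝ} (hτ : 0 < τ) :
    (Set.projIcc (0 : ℝ) 1 zero_le_one (exp (-τ)) : ℝ) = exp (-τ) :=
  congrArg Subtype.val (Set.projIcc_of_mem zero_le_one
    ⟨(exp_pos _).le, exp_le_one_iff.2 (neg_nonpos.2 hτ.le)⟩)

lemma integrableOn_continuousMap_exp_neg_mul (hf : IntegrableOn f (Set.Ioi 0)) (φ : C(I, ℝ)) :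
    IntegrableOn (fun τ ↦ φ (Set.projIcc 0 1 zero_le_one (exp (-τ))) * (exp (-τ) * f τ))
      (Set.Ioi 0) := by
  have hexp : IntegrableOn (fun τ ↦ exp (-τ) * f τ) (Set.Ioi 0) := by
    simpa only [pow_zero, one_mul, neg_one_mul] using
      integrableOn_one_sub_exp_neg_pow_mul_exp_mul hf 0 (neg_nonpos.2 zero_le_one)
  exact hexp.bdd_mul (by fun_prop) (.of_forall fun τ ↦ φ.norm_coe_le_norm _)

lemma integral_bernsteinApproximation_exp_neg_nonneg (hf : IntegrableOn f (Set.Ioi 0))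
    (h : AbsolutelyMonotoneOn (fun x ↦ ∫ τ in Set.Ioi 0, exp (x * τ) * f τ) (Set.Iio 0))
    {φ : C(I, ℝ)} (hφ : 0 ≤ φ) (n : ℕ) :
    0 ≤ ∫ τ in Set.Ioi 0, bernsteinApproximation n φ
      (Set.projIcc 0 1 zero_le_one (exp (-τ))) * (exp (-τ) * f τ) := by
  have hsum : ∀ τ ∈ Set.Ioi (0 : ℝ), bernsteinApproximation n φ
      (Set.projIcc 0 1 zero_le_one (exp (-τ))) * (exp (-τ) * f τ) =
      ∑ k : Fin (n + 1), (n.choose k * φ (bernstein.z k)) *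
        ((1 - exp (-τ)) ^ (n - k : ℕ) * exp (-τ) ^ (k + 1 : ℕ) * f τ) := fun τ hτ ↦ by
    rw [bernsteinApproximation.apply, Finset.sum_mul]
    refine Finset.sum_congr rfl fun k _ ↦ ?_
    rw [bernstein_apply, projIcc_exp_neg hτ, smul_eq_mul]
    ring
  rw [setIntegral_congr_fun measurableSet_Ioi hsum, integral_finsetSum]
  · refine Finset.sum_nonneg fun k _ ↦ ?_
    rw [integral_const_mul]
    exact mul_nonneg (mul_nonneg (Nat.cast_nonneg _) (hφ _))
      (integral_one_sub_exp_neg_pow_mul_exp_neg_pow_nonneg hf h _ _)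
  · intro k _
    have hi := integrableOn_one_sub_exp_neg_pow_mul_exp_mul hf (n - k)
      (neg_nonpos.2 (Nat.cast_nonneg (k + 1 : ℕ)))
    simp only [neg_mul, ← mul_neg, exp_nat_mul] at hi
    exact hi.const_mul _

lemma integral_continuousMap_exp_neg_mul_nonneg (hf : IntegrableOn f (Set.Ioi 0))
    (h : AbsolutelyMonotoneOn (fun x ↦ ∫ τ in Set.Ioi 0, exp (x * τ) * f τ) (Set.Iio 0))
    {φ : C(I, ℝ)} (hφ : 0 ≤ φ) :
    0 ≤ ∫ τ in Set.Ioi 0, φ (Set.projIcc 0 1 zero_le_one (exp (-τ))) * (exp (-τ) * f τ) := by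
  have hlim := bernsteinApproximation_uniform φ
  have hbound : ∀ᶠ n in atTop, ‖bernsteinApproximation n φ‖ ≤ ‖φ‖ + 1 :=
    hlim.norm.eventually (eventually_le_nhds (lt_add_one _))
  refine ge_of_tendsto' (x := atTop) (tendsto_integral_filter_of_dominated_convergence
    (fun τ ↦ (‖φ‖ + 1) * ‖exp (-τ) * f τ‖) ?_ ?_ ?_ ?_)
    (integral_bernsteinApproximation_exp_neg_nonneg hf h hφ)
  · exact .of_forall fun n ↦ (integrableOn_continuousMap_exp_neg_mul hf _).aestronglyMeasurable
  · filter_upwards [hbound] with n hn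
    refine .of_forall fun τ ↦ ?_
    rw [norm_mul]
    gcongr
    exact (ContinuousMap.norm_coe_le_norm _ _).trans hn
  · have := integrableOn_continuousMap_exp_neg_mul hf 1
    simp only [ContinuousMap.one_apply, one_mul] at this
    exact this.norm.const_mul _
  · exact .of_forall fun τ ↦
      (((continuous_eval_const _).tendsto φ).comp hlim).mul_const _

lemma exists_forall_abs_exp_neg_sub_lt_imp_lt {τ a : ℝ} (hf : ContinuousAt f τ) (ha : f τ < a) :
    ∃ δ > 0, ∀ t, |exp (-t) - exp (-τ)| < δ → f t < a := by
  have hlog : ContinuousAt (fun u ↦ f (-log u)) (exp (-τ)) := by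
    refine ContinuousAt.comp (f := fun u ↦ -log u) (g := f) ?_
      (continuousAt_log (exp_pos _).ne').neg
    simpa only [log_exp, neg_neg] using hf
  have hlt := hlog.eventually_lt_const (by simpa only [log_exp, neg_neg] using ha)
  obtain ⟨δ, hδ, hball⟩ := Metric.eventually_nhds_iff.1 hlt
  exact ⟨δ, hδ, fun t ht ↦ by simpa only [log_exp, neg_neg] using hball ht⟩

theorem nonneg_of_absolutelyMonotoneOn_integral_exp_mul (hf : IntegrableOn f (Set.Ioi 0))
    (hfc : ContinuousOn f (Set.Ioi 0))
    (h : AbsolutelyMonotoneOn (fun x ↦ ∫ τ in Set.Ioi 0, exp (x * τ) * f τ) (Set.Iio 0))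
    {τ : ℝ} (hτ : 0 < τ) : 0 ≤ f τ := by
  by_contra! hneg
  obtain ⟨δ, hδ, hball⟩ : ∃ δ > 0, ∀ t, |exp (-t) - exp (-τ)| < δ → f t < 0 :=
    exists_forall_abs_exp_neg_sub_lt_imp_lt (hfc.continuousAt (Ioi_mem_nhds hτ)) hneg
  let φ : C(I, ℝ) := ⟨fun u ↦ max 0 (δ - |u - exp (-τ)|), by fun_prop⟩
  let F : ℝ → ℝ := fun t ↦ φ (Set.projIcc 0 1 zero_le_one (exp (-t))) * (exp (-t) * f t)
  have hF : ∀ t ∈ Set.Ioi 0, F t = max 0 (δ - |exp (-t) - exp (-τ)|) * (exp (-t) * f t) :=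
    fun t ht ↦ by simp only [F, φ, ContinuousMap.coe_mk, projIcc_exp_neg ht]
  have hFneg : ∀ t ∈ Set.Ioi 0, F t ≤ 0 := fun t ht ↦ by
    rw [hF t ht]
    rcases lt_or_ge |exp (-t) - exp (-τ)| δ with hlt | hge
    · exact mul_nonpos_of_nonneg_of_nonpos (le_max_left _ _)
        (mul_nonpos_of_nonneg_of_nonpos (exp_pos _).le (hball t hlt).le)
    · rw [max_eq_left (sub_nonpos.2 hge), zero_mul]
  have hFzero : F =ᵐ[volume.restrict (Set.Ioi 0)] 0 := by
    have hint : IntegrableOn F (Set.Ioi 0) := integrableOn_continuousMap_exp_neg_mul hf φ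
    have hpos : 0 ≤ ∫ t in Set.Ioi 0, F t :=
      integral_continuousMap_exp_neg_mul_nonneg hf h fun u ↦ le_max_left _ _
    refine (integral_eq_iff_of_ae_le hint (integrable_zero _ _ _)
      (ae_restrict_of_forall_mem measurableSet_Ioi hFneg)).1 (le_antisymm ?_ ?_)
    · exact setIntegral_mono_on hint (integrable_zero _ _ _) measurableSet_Ioi hFneg
    · simpa only [Pi.zero_apply, integral_zero] using hpos
  have hFτ : F τ = 0 := Measure.eqOn_open_of_ae_eq hFzero isOpen_Ioi (by fun_prop)
    continuousOn_const hτ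
  refine hFτ.not_lt ?_
  rw [hF τ hτ, sub_self, abs_zero, sub_zero, max_eq_right hδ.le]
  exact mul_neg_of_pos_of_neg hδ (mul_neg_of_pos_of_neg (exp_pos _) hneg)

end LaplaceAbsolutelyMonotone

section LaplaceTransform

variable {E : Type*} [NormedAddCommGroup E] [NormedSpace ℂ E]

theorem eqOn_right_half_plane_of_bounded {f g : ℂ → E} {C : ℝ}
    (hf : DiffContOnCl ℂ f {z | 0 < z.re}) (hg : DiffContOnCl ℂ g {z | 0 < z.re})
    (hfC : ∀ z : ℂ, 0 ≤ z.re → ‖f z‖ ≤ C) (hgC : ∀ z : ℂ, 0 ≤ z.re → ‖g z‖ ≤ C)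
    (hfg : ∀ y : ℝ, f (y * I) = g (y * I)) : Set.EqOn f g {z | 0 ≤ z.re} := by
  have hbound : ∀ z : ℂ, 0 ≤ z.re → ‖(f - g) z‖ ≤ C + C := fun z hz ↦
    (norm_sub_le _ _).trans (add_le_add (hfC z hz) (hgC z hz))
  intro z hz
  refine sub_eq_zero.1 (norm_le_zero_iff.1 <| PhragmenLindelof.right_half_plane_of_bounded_on_real
    (hf.sub hg) ⟨1, one_lt_two, 0, .of_bound (C + C) ?_⟩
    (isBoundedUnder_of_eventually_le (a := C + C) ?_) (fun y ↦ ?_) hz)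
  · filter_upwards [mem_inf_of_right (mem_principal_self _)] with w hw
    simpa using hbound w (le_of_lt hw)
  · filter_upwards [eventually_ge_atTop 0] with x hx using hbound x (by simpa using hx)
  · rw [Pi.sub_apply, hfg, sub_self, norm_zero]

variable {f : ℝ → E}

lemma norm_exp_neg_mul_le_one {z : ℂ} {τ : ℝ} (hz : 0 ≤ z.re) (hτ : 0 ≤ τ) :
    ‖Complex.exp (-(z * τ))‖ ≤ 1 := by
  rw [Complex.norm_exp, Complex.neg_re, Complex.re_mul_ofReal, exp_le_one_iff, neg_nonpos]
  positivity

lemma norm_integral_exp_neg_mul_smul_le (hf : IntegrableOn f (Set.Ioi 0)) {z : ℂ}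
    (hz : 0 ≤ z.re) :
    ‖∫ τ : ℝ in Set.Ioi 0, Complex.exp (-(z * τ)) • f τ‖ ≤ ∫ τ in Set.Ioi 0, ‖f τ‖ := by
  refine norm_integral_le_of_norm_le hf.norm
    (ae_restrict_of_forall_mem measurableSet_Ioi fun τ hτ ↦ ?_)
  rw [norm_smul]
  exact mul_le_of_le_one_left (norm_nonneg _) (norm_exp_neg_mul_le_one hz (le_of_lt hτ))

lemma continuousOn_integral_exp_neg_mul_smul (hf : IntegrableOn f (Set.Ioi 0)) :
    ContinuousOn (fun z : ℂ ↦ ∫ τ : ℝ in Set.Ioi 0, Complex.exp (-(z * τ)) • f τ)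
      {z | 0 ≤ z.re} := by
  refine continuousOn_of_dominated (bound := fun τ ↦ ‖f τ‖) (fun z _ ↦ ?_) (fun z hz ↦ ?_)
    hf.norm (ae_of_all _ fun τ ↦ by fun_prop)
  · exact (Continuous.aestronglyMeasurable (by fun_prop)).smul hf.1
  · refine ae_restrict_of_forall_mem measurableSet_Ioi fun τ hτ ↦ ?_
    rw [norm_smul]
    exact mul_le_of_le_one_left (norm_nonneg _) (norm_exp_neg_mul_le_one hz (le_of_lt hτ))

lemma differentiableAt_integral_exp_neg_mul_smul (hf : IntegrableOn f (Set.Ioi 0)) {z : ℂ}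
    (hz : 0 < z.re) :
    DifferentiableAt ℂ (fun z : ℂ ↦ ∫ τ : ℝ in Set.Ioi 0, Complex.exp (-(z * τ)) • f τ) z := by
  obtain ⟨d, hd, hdz⟩ := exists_between hz
  have hmeas (g : ℝ → ℂ) (hg : Continuous g) :
      AEStronglyMeasurable (fun τ ↦ g τ • f τ) (volume.restrict (Set.Ioi 0)) :=
    hg.aestronglyMeasurable.smul hf.1
  refine (hasDerivAt_integral_of_dominated_loc_of_deriv_le
    (F' := fun z τ ↦ (Complex.exp (-(z * τ)) * -τ) • f τ) (bound := fun τ ↦ d⁻¹ * ‖f τ‖)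
    ((isOpen_lt continuous_const Complex.continuous_re).mem_nhds hdz)
    (.of_forall fun w ↦ hmeas _ (by fun_prop)) ?_ (hmeas _ (by fun_prop)) ?_
    (hf.norm.const_mul _) (ae_of_all _ fun τ w _ ↦ ?_)).2.differentiableAt
  · refine hf.norm.mono' (hmeas _ (by fun_prop))
      (ae_restrict_of_forall_mem measurableSet_Ioi fun τ hτ ↦ ?_)
    rw [norm_smul]
    exact mul_le_of_le_one_left (norm_nonneg _) (norm_exp_neg_mul_le_one hz.le (le_of_lt hτ))
  · refine ae_restrict_of_forall_mem measurableSet_Ioi fun τ hτ w hw ↦ ?_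
    rw [Set.mem_Ioi] at hτ
    rw [norm_smul, norm_mul, Complex.norm_exp, norm_neg, Complex.norm_real, norm_of_nonneg hτ.le,
      Complex.neg_re, Complex.re_mul_ofReal]
    gcongr
    rw [exp_neg, inv_mul_le_iff₀ (exp_pos _), ← div_eq_mul_inv, le_div_iff₀ hd, mul_comm]
    exact (mul_le_mul_of_nonneg_right (le_of_lt hw) hτ.le).trans
      (by linarith [add_one_le_exp (w.re * τ)])
  · simpa using ((hasDerivAt_id w).mul_const (τ : ℂ)).neg.cexp.smul_const (f τ)

lemma diffContOnCl_integral_exp_neg_mul_smul (hf : IntegrableOn f (Set.Ioi 0)) :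
    DiffContOnCl ℂ (fun z : ℂ ↦ ∫ τ : ℝ in Set.Ioi 0, Complex.exp (-(z * τ)) • f τ)
      {z | 0 < z.re} where
  differentiableOn := fun _ hz ↦
    (differentiableAt_integral_exp_neg_mul_smul hf hz).differentiableWithinAt
  continuousOn := by
    rw [Complex.closure_setOfPred_lt_re]
    exact continuousOn_integral_exp_neg_mul_smul hf

end LaplaceTransform

section SubordinationConstant

variable {γ : ℝ}

lemma integrableOn_one_sub_exp_neg_mul_rpow (hγ₀ : 0 < γ) (hγ₁ : γ < 1) :
    IntegrableOn (fun τ ↦ (1 - exp (-τ)) * τ ^ (-γ - 1)) (Set.Ioi 0) := by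
  have hcont : Continuous fun τ ↦ 1 - exp (-τ) := by fun_prop
  have h := mellin_convergent_of_isBigO_scalar (a := 0) (b := -1) (s := -γ)
    (hcont.locallyIntegrable.locallyIntegrableOn _) (.of_norm_eventuallyLE ?_) (by linarith)
    (.of_norm_eventuallyLE ?_) (by linarith)
  · exact h.congr_fun (fun τ _ ↦ mul_comm _ _) measurableSet_Ioi
  · filter_upwards [eventually_ge_atTop 0] with τ hτ
    rw [neg_zero, rpow_zero, norm_of_nonneg (one_sub_exp_neg_nonneg hτ)]
    exact sub_le_self 1 (exp_pos _).le
  · filter_upwards [self_mem_nhdsWithin] with τ (hτ : 0 < τ)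
    rw [neg_neg, rpow_one, norm_of_nonneg (one_sub_exp_neg_nonneg hτ.le)]
    linarith [one_sub_le_exp_neg τ]

lemma tendsto_one_sub_exp_neg_mul_rpow_nhdsGT_zero (hγ₁ : γ < 1) :
    Tendsto (fun τ ↦ (1 - exp (-τ)) * τ ^ (-γ)) (𝓝[>] 0) (𝓝 0) := by
  have hlim : Tendsto (fun τ : ℝ ↦ τ ^ (1 - γ)) (𝓝[>] 0) (𝓝 0) := by
    have h := (continuousAt_rpow_const 0 (1 - γ) (.inr (by linarith))).tendsto
    rw [zero_rpow (by linarith)] at h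
    exact h.mono_left nhdsWithin_le_nhds
  refine squeeze_zero' ?_ ?_ hlim <;> filter_upwards [self_mem_nhdsWithin] with τ (hτ : 0 < τ)
  · exact mul_nonneg (one_sub_exp_neg_nonneg hτ.le) (rpow_nonneg hτ.le _)
  · rw [sub_eq_add_neg 1 γ, rpow_add hτ, rpow_one]
    gcongr
    linarith [one_sub_le_exp_neg τ]

lemma tendsto_one_sub_exp_neg_mul_rpow_atTop (hγ₀ : 0 < γ) :
    Tendsto (fun τ ↦ (1 - exp (-τ)) * τ ^ (-γ)) atTop (𝓝 0) := by
  refine squeeze_zero' ?_ ?_ (tendsto_rpow_neg_atTop hγ₀) <;>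
    filter_upwards [eventually_ge_atTop 0] with τ hτ
  · exact mul_nonneg (one_sub_exp_neg_nonneg hτ) (rpow_nonneg hτ _)
  · exact mul_le_of_le_one_left (rpow_nonneg hτ _) (sub_le_self 1 (exp_pos _).le)

theorem integral_one_sub_exp_neg_div_rpow (hγ₀ : 0 < γ) (hγ₁ : γ < 1) :
    ∫ τ in Set.Ioi 0, (1 - exp (-τ)) / τ ^ (1 + γ) = Gamma (1 - γ) / γ := by
  have hint : IntegrableOn (fun τ ↦ (1 - exp (-τ)) * (-γ * τ ^ (-γ - 1))) (Set.Ioi 0) := by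
    simp only [mul_left_comm _ (-γ)]
    exact (integrableOn_one_sub_exp_neg_mul_rpow hγ₀ hγ₁).const_mul (-γ)
  have hparts := integral_Ioi_mul_deriv_eq_deriv_mul (a := 0) (a' := 0) (b' := 0)
    (u := fun τ ↦ 1 - exp (-τ)) (u' := fun τ ↦ exp (-τ))
    (v := fun τ ↦ τ ^ (-γ)) (v' := fun τ ↦ -γ * τ ^ (-γ - 1))
    (fun τ _ ↦ by simpa using (hasDerivAt_neg τ).exp.const_sub 1)
    (fun τ hτ ↦ hasDerivAt_rpow_const (.inl (ne_of_gt hτ)))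
    hint
    (by simpa [Pi.mul_def] using GammaIntegral_convergent (sub_pos.2 hγ₁))
    (tendsto_one_sub_exp_neg_mul_rpow_nhdsGT_zero hγ₁)
    (tendsto_one_sub_exp_neg_mul_rpow_atTop hγ₀)
  have hGamma : ∫ τ in Set.Ioi 0, exp (-τ) * τ ^ (-γ) = Gamma (1 - γ) := by
    rw [Gamma_eq_integral (sub_pos.2 hγ₁), sub_sub_cancel_left]
  have hdiv : ∫ τ in Set.Ioi 0, (1 - exp (-τ)) * (-γ * τ ^ (-γ - 1)) =
      -γ * ∫ τ in Set.Ioi 0, (1 - exp (-τ)) / τ ^ (1 + γ) := by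
    rw [← integral_const_mul]
    refine setIntegral_congr_fun measurableSet_Ioi fun τ (hτ : 0 < τ) ↦ ?_
    simp only [div_eq_mul_inv, ← rpow_neg hτ.le, neg_add']
    ring_nf
  rw [hGamma, hdiv] at hparts
  rw [eq_div_iff hγ₀.ne']
  linarith

lemma inv_integral_one_sub_exp_neg_div_rpow (hγ₀ : 0 < γ) (hγ₁ : γ < 1) :
    (∫ τ in Set.Ioi 0, (1 - exp (-τ)) / τ ^ (1 + γ))⁻¹ = Gamma (1 + γ) * sin (π * γ) / π := by
  have hsin : 0 < sin (π * γ) :=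
    sin_pos_of_pos_of_lt_pi (by positivity) (mul_lt_of_lt_one_right pi_pos hγ₁)
  have hreflection := Gamma_mul_Gamma_one_sub γ
  rw [eq_div_iff hsin.ne'] at hreflection
  have hΓ : Gamma (1 - γ) ≠ 0 := (Gamma_pos_of_pos (sub_pos.2 hγ₁)).ne'
  rw [integral_one_sub_exp_neg_div_rpow hγ₀ hγ₁, inv_div, add_comm, Gamma_add_one hγ₀.ne',
    div_eq_div_iff hΓ pi_ne_zero]
  linear_combination -γ * hreflection

end SubordinationConstant

section FourierInversion

lemma integral_eq_two_mul_re_integral_Ioi {f : ℝ → ℂ} (hf : Integrable f)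
    (hconj : ∀ v, f (-v) = conj (f v)) : ∫ v, f v = (2 * (∫ v in Set.Ioi 0, f v).re : ℝ) := by
  have hneg : ∫ v in Set.Iic 0, f v = conj (∫ v in Set.Ioi 0, f v) := by
    rw [← integral_conj, ← neg_zero, ← integral_comp_neg_Ioi, neg_zero]
    simp only [hconj]
  rw [← intervalIntegral.integral_Iic_add_Ioi hf.integrableOn hf.integrableOn, hneg, add_comm,
    Complex.add_conj, Complex.ofReal_mul, Complex.ofReal_ofNat]

variable {E : Type*} [NormedAddCommGroup E] [NormedSpace ℂ E]

lemma contDiff_fourierInv {f : ℝ → E} (hf : ∀ n : ℕ, Integrable fun v ↦ ‖v‖ ^ n * ‖f v‖) :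
    ContDiff ℝ (⊤ : ℕ∞) (𝓕⁻ f) := by
  have h : 𝓕⁻ f = fun τ ↦ 𝓕 f (-τ) := funext (Real.fourierInv_eq_fourier_neg f)
  exact h ▸ (Real.contDiff_fourier fun n _ ↦ hf n).comp contDiff_neg

lemma norm_iteratedDeriv_fourierInv_le {f : ℝ → E} (hfm : AEStronglyMeasurable f)
    (hf : ∀ n : ℕ, Integrable fun v ↦ ‖v‖ ^ n * ‖f v‖) (m : ℕ) (τ : ℝ) :
    ‖iteratedDeriv m (𝓕⁻ f) τ‖ ≤ ∫ v : ℝ, ‖(-2 * π * I * v) ^ m • f v‖ := by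
  have h : 𝓕⁻ f = fun τ ↦ 𝓕 f (-τ) := funext (Real.fourierInv_eq_fourier_neg f)
  have hmoment (n : ℕ) : Integrable fun v : ℝ ↦ v ^ n • f v := by
    refine (integrable_norm_iff (by fun_prop)).1 ((hf n).congr (ae_of_all _ fun v ↦ ?_))
    simp only [norm_smul, norm_pow]
  rw [h, iteratedDeriv_comp_neg, norm_smul, norm_pow, norm_neg, norm_one, one_pow, one_mul,
    Real.iteratedDeriv_fourier (N := ⊤) (fun n _ ↦ hmoment n) le_top]
  exact VectorFourier.norm_fourierIntegral_le_integral_norm _ _ _ _ _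

end FourierInversion

section StableDensity

variable {γ : ℝ}

lemma cos_mul_pi_div_two_pos (hγ₀ : 0 < γ) (hγ₁ : γ < 1) : 0 < cos (γ * (π / 2)) :=
  cos_pos_of_mem_Ioo ⟨by nlinarith [pi_pos], by nlinarith [pi_pos]⟩

lemma cos_mul_norm_rpow_le_re_cpow (hγ₀ : 0 ≤ γ) (hγ₂ : γ ≤ 2) {z : ℂ} (hz : 0 ≤ z.re) :
    cos (γ * (π / 2)) * ‖z‖ ^ γ ≤ (z ^ (γ : ℂ)).re := by
  have harg := Complex.abs_arg_le_pi_div_two_iff.2 hz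
  rw [Complex.cpow_ofReal_re, mul_comm]
  gcongr
  rw [← cos_abs (z.arg * γ), abs_mul, abs_of_nonneg hγ₀, mul_comm |z.arg|]
  exact cos_le_cos_of_nonneg_of_le_pi (by positivity) (by nlinarith [pi_pos]) (by gcongr)

lemma continuousOn_cpow_of_re_nonneg (hγ₀ : 0 < γ) :
    ContinuousOn (fun z : ℂ ↦ z ^ (γ : ℂ)) {z | 0 ≤ z.re} := fun _ hz ↦
  (Complex.continuousAt_cpow_const_of_re_pos (.inl hz) (by simpa using hγ₀)).continuousWithinAt

/-- The Fourier transform `v ↦ exp (-(2πiv) ^ γ)` of the one-sided `γ`-stable law, in Mathlib's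
normalisation: the Laplace transform `exp (-z ^ γ)` on the imaginary axis `z = 2πiv`. -/
noncomputable def stableFourier (γ v : ℝ) : ℂ :=
  Complex.exp (-(2 * π * v * I) ^ (γ : ℂ))

/-- The density of the one-sided `γ`-stable law, as an inverse Fourier transform. The inverse
transform is real valued (`ofReal_stableDensity`), so that taking real parts only changes the
type. -/
noncomputable def stableDensity (γ τ : ℝ) : ℝ :=
  (𝓕⁻ (stableFourier γ) τ).re

lemma continuous_stableFourier (hγ₀ : 0 < γ) : Continuous (stableFourier γ) :=
  Complex.continuous_exp.comp
    ((continuousOn_cpow_of_re_nonneg hγ₀).comp_continuous (by fun_prop) (by simp)).neg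

lemma stableFourier_neg (γ v : ℝ) : stableFourier γ (-v) = conj (stableFourier γ v) := by
  have harg : (2 * π * v * I : ℂ).arg ≠ π := fun h ↦ by simpa using (Complex.arg_eq_pi_iff.1 h).1
  have h := Complex.conj_cpow _ (γ : ℂ) harg
  simp only [map_mul, Complex.conj_ofReal, Complex.conj_I, map_ofNat] at h
  rw [stableFourier, stableFourier, ← Complex.exp_conj, map_neg, ← h]
  simp

lemma norm_stableFourier_le (hγ₀ : 0 < γ) (hγ₁ : γ < 1) (v : ℝ) :
    ‖stableFourier γ v‖ ≤ exp (-(cos (γ * (π / 2)) * (2 * π) ^ γ) * |v| ^ γ) := by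
  have h := cos_mul_norm_rpow_le_re_cpow hγ₀.le (by linarith) (z := 2 * π * v * I) (by simp)
  have hnorm : ‖(2 * π * v * I : ℂ)‖ = 2 * π * |v| := by simp [abs_of_pos pi_pos]
  rw [hnorm, mul_rpow two_pi_pos.le (abs_nonneg v), ← mul_assoc] at h
  rw [stableFourier, Complex.norm_exp, Complex.neg_re, neg_mul]
  exact exp_le_exp.2 (neg_le_neg h)

lemma integrable_pow_mul_norm_stableFourier (hγ₀ : 0 < γ) (hγ₁ : γ < 1) (n : ℕ) :
    Integrable fun v ↦ ‖v‖ ^ n * ‖stableFourier γ v‖ := by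
  set c := cos (γ * (π / 2)) * (2 * π) ^ γ
  have hc : 0 < c := mul_pos (cos_mul_pi_div_two_pos hγ₀ hγ₁) (by positivity)
  have hmeas : Continuous fun v ↦ ‖v‖ ^ n * ‖stableFourier γ v‖ := by
    have := continuous_stableFourier hγ₀
    fun_prop
  refine hmeas.locallyIntegrable.integrable_of_isBigO_atTop_of_norm_isNegInvariant
    (g := fun v ↦ v ^ (n : ℝ) * exp (-c * v ^ γ)) (ae_of_all _ fun v ↦ ?_) ?_
    ⟨Set.Ioi 0, Ioi_mem_atTop 0,
      integrableOn_rpow_mul_exp_neg_mul_rpow (by linarith [n.cast_nonneg (α := ℝ)]) hγ₀ hc⟩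
  · simp [stableFourier_neg]
  · refine .of_norm_eventuallyLE ?_
    filter_upwards [eventually_ge_atTop 0] with v hv
    rw [norm_mul, norm_pow, norm_norm, norm_norm, Real.norm_of_nonneg hv, rpow_natCast]
    gcongr
    simpa only [abs_of_nonneg hv] using norm_stableFourier_le hγ₀ hγ₁ v

lemma integrable_stableFourier (hγ₀ : 0 < γ) (hγ₁ : γ < 1) : Integrable (stableFourier γ) := by
  rw [← integrable_norm_iff (continuous_stableFourier hγ₀).aestronglyMeasurable]
  simpa only [pow_zero, one_mul] using integrable_pow_mul_norm_stableFourier hγ₀ hγ₁ 0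

lemma contDiff_stableDensity (hγ₀ : 0 < γ) (hγ₁ : γ < 1) :
    ContDiff ℝ (⊤ : ℕ∞) (stableDensity γ) :=
  Complex.reCLM.contDiff.comp
    (contDiff_fourierInv (integrable_pow_mul_norm_stableFourier hγ₀ hγ₁))

lemma exists_abs_iteratedDeriv_stableDensity_le (hγ₀ : 0 < γ) (hγ₁ : γ < 1) (m : ℕ) :
    ∃ B, ∀ τ, |iteratedDeriv m (stableDensity γ) τ| ≤ B := by
  have hmoment := integrable_pow_mul_norm_stableFourier hγ₀ hγ₁
  refine ⟨∫ v : ℝ, ‖(-2 * π * I * v) ^ m • stableFourier γ v‖, fun τ ↦ ?_⟩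
  have h := Complex.reCLM.norm_iteratedFDeriv_comp_left (x := τ) (n := m)
    (contDiff_fourierInv hmoment).contDiffAt (mod_cast le_top)
  rw [Complex.reCLM_norm, one_mul, norm_iteratedFDeriv_eq_norm_iteratedDeriv,
    norm_iteratedFDeriv_eq_norm_iteratedDeriv] at h
  exact h.trans (norm_iteratedDeriv_fourierInv_le
    (continuous_stableFourier hγ₀).aestronglyMeasurable hmoment m τ)

lemma fourierInv_stableFourier_eq (hγ₀ : 0 < γ) (hγ₁ : γ < 1) (τ : ℝ) :
    𝓕⁻ (stableFourier γ) τ = (2 * (∫ v : ℝ in Set.Ioi 0,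
      Complex.exp (2 * π * v * I * τ) * stableFourier γ v).re : ℝ) := by
  have h := Real.fourierInv_eq' (stableFourier γ) τ
  rw [h, integral_eq_two_mul_re_integral_Ioi]
  · simp [mul_assoc, mul_comm, mul_left_comm]
  · refine (integrable_stableFourier hγ₀ hγ₁).bdd_mul (c := 1)
      (by fun_prop) (ae_of_all _ fun v ↦ ?_)
    rw [Complex.norm_exp_ofReal_mul_I]
  · intro v
    simp [stableFourier_neg, ← Complex.exp_conj, map_ofNat]

lemma ofReal_stableDensity (hγ₀ : 0 < γ) (hγ₁ : γ < 1) (τ : ℝ) :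
    (stableDensity γ τ : ℂ) = 𝓕⁻ (stableFourier γ) τ := by
  rw [stableDensity, fourierInv_stableFourier_eq hγ₀ hγ₁, Complex.ofReal_re]

/-- The integrand of Hankel-type contour integrals in the logarithmic variable `w = log z`: up to
the factor `exp (s * w) = z ^ s`, it is `exp (a * z - b * z ^ γ)`, and rays from the origin in the
`z`-plane become horizontal lines. -/
noncomputable def hankelIntegrand (γ a b s : ℝ) (w : ℂ) : ℂ :=
  Complex.exp (a * Complex.exp w - b * Complex.exp (γ * w) + s * w)

lemma differentiable_hankelIntegrand (γ a b s : ℝ) :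
    Differentiable ℂ (hankelIntegrand γ a b s) := by
  unfold hankelIntegrand
  fun_prop

lemma continuous_hankelIntegrand_line (γ a b s y : ℝ) :
    Continuous fun x : ℝ ↦ hankelIntegrand γ a b s (x + y * I) :=
  (differentiable_hankelIntegrand γ a b s).continuous.comp (by fun_prop)

lemma norm_hankelIntegrand (γ a b s x y : ℝ) :
    ‖hankelIntegrand γ a b s (x + y * I)‖ =
      exp (a * (exp x * cos y) - b * (exp (γ * x) * cos (γ * y)) + s * x) := by
  have h : (γ * (x + y * I) : ℂ) = (γ * x : ℝ) + (γ * y : ℝ) * I := by push_cast; ring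
  rw [hankelIntegrand, Complex.norm_exp, h]
  simp [Complex.exp_re]

lemma hankelIntegrand_sub_log (γ : ℝ) {τ : ℝ} (hτ : 0 < τ) (w : ℂ) :
    hankelIntegrand γ τ 1 1 (w - log τ) = τ⁻¹ * hankelIntegrand γ 1 (τ ^ (-γ)) 1 w := by
  have hexp : Complex.exp (log τ) = τ := by rw [← Complex.ofReal_exp, exp_log hτ]
  have hpow : Complex.exp (γ * (w - log τ)) = (τ ^ (-γ) : ℝ) * Complex.exp (γ * w) := by
    rw [rpow_def_of_pos hτ, Complex.ofReal_exp, ← Complex.exp_add]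
    congr 1
    push_cast
    ring
  have hτ' : (τ : ℂ) ≠ 0 := mod_cast hτ.ne'
  simp only [hankelIntegrand, hpow, Complex.exp_sub w, hexp, Complex.ofReal_one, one_mul,
    mul_div_cancel₀ _ hτ', ← add_sub_assoc]
  rw [Complex.exp_sub _ (log τ : ℂ), hexp, div_eq_inv_mul, Complex.ofReal_inv]

lemma hasDerivAt_hankelIntegrand (γ a b s : ℝ) (w : ℂ) :
    HasDerivAt (fun b ↦ hankelIntegrand γ a b s w) (-hankelIntegrand γ a b (s + γ) w) b := by
  have h := ((((hasDerivAt_id b).ofReal_comp.mul_const (Complex.exp (γ * w))).const_sub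
    (a * Complex.exp w)).add_const (s * w)).cexp
  refine h.congr_deriv ?_
  rw [hankelIntegrand, id_eq, Complex.ofReal_one, one_mul, mul_neg, ← Complex.exp_add]
  congr 2
  push_cast
  ring

lemma integral_hankelIntegrand_eq_of_mul_cos_nonpos {a b s A B : ℝ} (hγ₀ : 0 < γ) (hb : 0 < b)
    (hs : 0 < s) (hA : 0 ≤ A) (hAB : A ≤ B) (hB : γ * B < π / 2)
    (ha : ∀ y ∈ Set.Icc A B, a * cos y ≤ 0) :
    ∫ x : ℝ, hankelIntegrand γ a b s (x + A * I) =
      ∫ x : ℝ, hankelIntegrand γ a b s (x + B * I) := by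
  have hc : 0 < b * cos (γ * B) :=
    mul_pos hb (cos_pos_of_mem_Ioo ⟨by nlinarith [pi_pos, mul_nonneg hγ₀.le (hA.trans hAB)], hB⟩)
  refine integral_horizontal_line_eq (differentiable_hankelIntegrand γ a b s).differentiableOn
    (integrable_exp_mul_sub_mul_exp hs hγ₀ hc) (tendsto_exp_mul_sub_mul_exp_cocompact hs hγ₀ hc)
    fun x y hy ↦ ?_
  rw [Set.uIcc_of_le hAB] at hy
  have hcos : cos (γ * B) ≤ cos (γ * y) := cos_le_cos_of_nonneg_of_le_pi
    (mul_nonneg hγ₀.le (hA.trans hy.1)) (by linarith [pi_pos]) (by gcongr; exact hy.2)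
  have h₁ : exp x * (a * cos y) ≤ 0 := mul_nonpos_of_nonneg_of_nonpos (exp_pos x).le (ha y hy)
  have h₂ : b * exp (γ * x) * cos (γ * B) ≤ b * exp (γ * x) * cos (γ * y) := by gcongr
  rw [norm_hankelIntegrand]
  exact exp_le_exp.2 (by linarith)

lemma norm_hankelIntegrand_le {b s θ y : ℝ} (hb : 0 ≤ b) (hcos : 0 ≤ cos (γ * y))
    (hθ : 0 ≤ θ) (hθy : θ ≤ y) (hy : y ≤ π) (x : ℝ) :
    ‖hankelIntegrand γ 1 b s (x + y * I)‖ ≤ exp (s * x - -cos θ * exp (1 * x)) := by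
  have h₁ : exp x * cos y ≤ exp x * cos θ := by
    gcongr
    exact cos_le_cos_of_nonneg_of_le_pi hθ hy hθy
  have h₂ : 0 ≤ b * (exp (γ * x) * cos (γ * y)) := by positivity
  rw [norm_hankelIntegrand, one_mul, one_mul]
  exact exp_le_exp.2 (by linarith)

lemma neg_cos_pos {θ : ℝ} (hθ : θ ∈ Set.Ioc (π / 2) π) : 0 < -cos θ :=
  neg_pos.2 (cos_neg_of_pi_div_two_lt_of_lt hθ.1 (by linarith [hθ.2, pi_pos]))

lemma integrable_hankelIntegrand {b s θ : ℝ} (hb : 0 ≤ b) (hs : 0 < s)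
    (hθ : θ ∈ Set.Ioc (π / 2) π) (hcos : 0 ≤ cos (γ * θ)) :
    Integrable fun x : ℝ ↦ hankelIntegrand γ 1 b s (x + θ * I) :=
  (integrable_exp_mul_sub_mul_exp hs one_pos (neg_cos_pos hθ)).mono'
    (continuous_hankelIntegrand_line γ 1 b s θ).aestronglyMeasurable (ae_of_all _ <|
      norm_hankelIntegrand_le hb hcos (by linarith [hθ.1, pi_pos]) le_rfl hθ.2)

lemma Gamma_eq_integral_exp {s : ℝ} (hs : 0 < s) : Gamma s = ∫ x, exp (s * x - exp x) := by
  rw [Gamma_eq_integral hs, ← integral_exp_smul_comp_exp]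
  refine integral_congr_ae (ae_of_all _ fun x ↦ ?_)
  simp only [smul_eq_mul, ← exp_mul, ← exp_add]
  ring_nf

lemma integral_hankelIntegrand_one_zero {s θ : ℝ} (hs : 0 < s) (hθ : θ ∈ Set.Ioc (π / 2) π) :
    ∫ x : ℝ, hankelIntegrand γ 1 0 s (x + θ * I) = Gamma s * Complex.exp (s * π * I) := by
  have hc := neg_cos_pos hθ
  have hshift : ∫ x : ℝ, hankelIntegrand γ 1 0 s (x + θ * I) =
      ∫ x : ℝ, hankelIntegrand γ 1 0 s (x + π * I) := by
    refine integral_horizontal_line_eq (differentiable_hankelIntegrand γ 1 0 s).differentiableOn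
      (integrable_exp_mul_sub_mul_exp hs one_pos hc)
      (tendsto_exp_mul_sub_mul_exp_cocompact hs one_pos hc) fun x y hy ↦ ?_
    rw [Set.uIcc_of_le hθ.2] at hy
    have h := norm_hankelIntegrand_le (γ := 0) (s := s) le_rfl (by simp)
      (by linarith [hθ.1, pi_pos]) hy.1 hy.2 x
    simpa only [hankelIntegrand, Complex.ofReal_zero, zero_mul] using h
  have hπ (x : ℝ) : hankelIntegrand γ 1 0 s (x + π * I) =
      (exp (s * x - exp x) : ℝ) * Complex.exp (s * π * I) := by
    rw [hankelIntegrand, Complex.exp_add x, Complex.exp_pi_mul_I, Complex.ofReal_exp,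
      ← Complex.exp_add]
    congr 1
    push_cast
    ring
  rw [hshift, Gamma_eq_integral_exp hs]
  simp only [hπ]
  rw [integral_mul_const, integral_complex_ofReal]

lemma tendsto_slope_integral_hankelIntegrand {s θ : ℝ} (hγ₀ : 0 < γ) (hs : 0 < s)
    (hθ : θ ∈ Set.Ioc (π / 2) π) (hcos : 0 ≤ cos (γ * θ)) :
    Tendsto (fun b : ℝ ↦ b⁻¹ • ((∫ x : ℝ, hankelIntegrand γ 1 b s (x + θ * I)) -
        ∫ x : ℝ, hankelIntegrand γ 1 0 s (x + θ * I)))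
      (𝓝[>] 0) (𝓝 (-∫ x : ℝ, hankelIntegrand γ 1 0 (s + γ) (x + θ * I))) := by
  set Φ : ℝ → ℝ → ℂ := fun b x ↦ hankelIntegrand γ 1 b s (x + θ * I)
  have hbound : ∀ b ∈ Set.Ici (0 : ℝ), ∀ x : ℝ,
      ‖Φ b x - Φ 0 x‖ ≤ ‖hankelIntegrand γ 1 0 (s + γ) (x + θ * I)‖ * ‖b - 0‖ := by
    intro b hb x
    refine (convex_Ici (0 : ℝ)).norm_image_sub_le_of_norm_hasDerivWithin_le
      (fun b _ ↦ (hasDerivAt_hankelIntegrand γ 1 b s _).hasDerivWithinAt) (fun b hb ↦ ?_)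
      Set.self_mem_Ici hb
    rw [norm_neg, norm_hankelIntegrand, norm_hankelIntegrand]
    have h : 0 ≤ b * (exp (γ * x) * cos (γ * θ)) :=
      mul_nonneg hb (mul_nonneg (exp_pos _).le hcos)
    exact exp_le_exp.2 (by linarith)
  have hlim : Tendsto (fun b ↦ ∫ x, b⁻¹ • (Φ b x - Φ 0 x)) (𝓝[>] 0)
      (𝓝 (∫ x : ℝ, -hankelIntegrand γ 1 0 (s + γ) (x + θ * I))) := by
    refine tendsto_integral_filter_of_dominated_convergence
      (fun x : ℝ ↦ ‖hankelIntegrand γ 1 0 (s + γ) (x + θ * I)‖) (.of_forall fun b ↦ ?_) ?_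
      (integrable_hankelIntegrand le_rfl (by positivity) hθ hcos).norm (ae_of_all _ fun x ↦ ?_)
    · exact (((continuous_hankelIntegrand_line γ 1 b s θ).sub
        (continuous_hankelIntegrand_line γ 1 0 s θ)).const_smul b⁻¹).aestronglyMeasurable
    · filter_upwards [self_mem_nhdsWithin] with b hb
      refine ae_of_all _ fun x ↦ ?_
      rw [norm_smul, norm_inv, inv_mul_le_iff₀ (norm_pos_iff.2 (ne_of_gt hb)), mul_comm]
      simpa only [sub_zero] using hbound b (Set.mem_Ioi.1 hb).le x
    · simpa only [zero_add] using
        (hasDerivAt_hankelIntegrand γ 1 0 s (x + θ * I)).tendsto_slope_zero_right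
  rw [integral_neg] at hlim
  refine hlim.congr' ?_
  filter_upwards [self_mem_nhdsWithin] with b hb
  rw [integral_smul, integral_sub (integrable_hankelIntegrand (Set.mem_Ioi.1 hb).le hs hθ hcos)
    (integrable_hankelIntegrand le_rfl hs hθ hcos)]

lemma stableDensity_eq_im_integral (hγ₀ : 0 < γ) (hγ₁ : γ < 1) (τ : ℝ) :
    stableDensity γ τ =
      π⁻¹ * (∫ x : ℝ, hankelIntegrand γ τ 1 1 (x + (π / 2 : ℝ) * I)).im := by
  set f : ℝ → ℂ := fun t ↦ Complex.exp (τ * (t * I)) * Complex.exp (-(t * I) ^ (γ : ℂ)) with hf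
  have hexp (x : ℝ) : Complex.exp (x + (π / 2 : ℝ) * I) = exp x * I := by
    rw [Complex.exp_add, Complex.ofReal_exp]
    push_cast
    rw [Complex.exp_pi_div_two_mul_I]
  have hpow (x : ℝ) : (exp x * I : ℂ) ^ (γ : ℂ) = Complex.exp (γ * (x + (π / 2 : ℝ) * I)) := by
    rw [← hexp, Complex.cpow_def_of_ne_zero (Complex.exp_ne_zero _), Complex.log_exp, mul_comm]
    · simpa using by linarith [pi_pos]
    · simpa using by linarith [pi_pos]
  have hlog (x : ℝ) : exp x • f (exp x) = -I * hankelIntegrand γ τ 1 1 (x + (π / 2 : ℝ) * I) := by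
    simp only [hf, hankelIntegrand, hpow, sub_eq_add_neg, Complex.exp_add (_ + _), hexp,
      Complex.exp_add _ (-_), Complex.ofReal_one, one_mul, Complex.real_smul]
    linear_combination exp x * Complex.exp (τ * (exp x * I)) *
      Complex.exp (-Complex.exp (γ * (x + (π / 2 : ℝ) * I))) * Complex.I_sq
  have hscale : ∫ v : ℝ in Set.Ioi 0, Complex.exp (2 * π * v * I * τ) * stableFourier γ v =
      (2 * π)⁻¹ • ∫ t in Set.Ioi 0, f t := by
    have h := integral_comp_mul_left_Ioi f 0 two_pi_pos
    rw [mul_zero] at h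
    rw [← h]
    simp [hf, stableFourier, mul_comm, mul_left_comm]
  rw [← Complex.ofReal_inj, ofReal_stableDensity hγ₀ hγ₁,
    fourierInv_stableFourier_eq hγ₀ hγ₁, Complex.ofReal_inj, hscale, ← integral_exp_smul_comp_exp]
  simp only [hlog]
  rw [integral_const_mul, Complex.smul_re, smul_eq_mul, neg_mul, Complex.neg_re, Complex.I_mul_re]
  ring

lemma stableDensity_eq_zero_of_nonpos (hγ₀ : 0 < γ) (hγ₁ : γ < 1) {τ : ℝ} (hτ : τ ≤ 0) :
    stableDensity γ τ = 0 := by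
  have hreal (x : ℝ) : hankelIntegrand γ τ 1 1 (x + (0 : ℝ) * I) =
      (exp (τ * exp x - exp (γ * x) + x) : ℝ) := by
    simp [hankelIntegrand]
  rw [stableDensity_eq_im_integral hγ₀ hγ₁, ← integral_hankelIntegrand_eq_of_mul_cos_nonpos hγ₀
    one_pos one_pos le_rfl pi_div_two_pos.le (by nlinarith [pi_pos]) fun y hy ↦
      mul_nonpos_of_nonpos_of_nonneg hτ (cos_nonneg_of_mem_Icc ⟨by linarith [hy.1, pi_pos], hy.2⟩)]
  simp only [hreal]
  rw [integral_complex_ofReal, Complex.ofReal_im, mul_zero]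

lemma stableDensity_eq_im_integral_of_pos {τ θ : ℝ} (hγ₀ : 0 < γ) (hγ₁ : γ < 1) (hτ : 0 < τ)
    (hθ : θ ∈ Set.Ioc (π / 2) π) (hγθ : γ * θ < π / 2) :
    stableDensity γ τ =
      π⁻¹ * (τ⁻¹ * (∫ x : ℝ, hankelIntegrand γ 1 (τ ^ (-γ)) 1 (x + θ * I)).im) := by
  have htranslate : ∫ x : ℝ, hankelIntegrand γ τ 1 1 (x + θ * I) =
      (τ⁻¹ : ℝ) * ∫ x : ℝ, hankelIntegrand γ 1 (τ ^ (-γ)) 1 (x + θ * I) := by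
    rw [← integral_sub_right_eq_self _ (log τ), ← integral_const_mul]
    congr with x
    have h := hankelIntegrand_sub_log γ hτ (x + θ * I)
    rw [← h, Complex.ofReal_sub, sub_add_eq_add_sub]
  rw [stableDensity_eq_im_integral hγ₀ hγ₁, integral_hankelIntegrand_eq_of_mul_cos_nonpos hγ₀
    one_pos one_pos pi_div_two_pos.le hθ.1.le hγθ fun y hy ↦
      mul_nonpos_of_nonneg_of_nonpos hτ.le
        (cos_nonpos_of_pi_div_two_le_of_le hy.1 (by linarith [hy.2, hθ.2, pi_pos])),
    htranslate, Complex.im_ofReal_mul]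

theorem tendsto_rpow_mul_stableDensity (hγ₀ : 0 < γ) (hγ₁ : γ < 1) :
    Tendsto (fun τ ↦ τ ^ (1 + γ) * stableDensity γ τ) atTop
      (𝓝 (Gamma (1 + γ) * sin (π * γ) / π)) := by
  obtain ⟨θ, hθ, hγθ⟩ : ∃ θ ∈ Set.Ioc (π / 2) π, γ * θ < π / 2 := by
    refine ⟨π / (1 + γ), ⟨?_, ?_⟩, ?_⟩
    · gcongr
      linarith
    · exact div_le_self pi_pos.le (by linarith)
    · rw [mul_div_assoc', div_lt_div_iff₀ (by linarith) two_pos]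
      nlinarith [pi_pos]
  have hcos : 0 ≤ cos (γ * θ) := cos_nonneg_of_mem_Icc
    ⟨by nlinarith [pi_pos, mul_pos hγ₀ (pi_div_two_pos.trans hθ.1)], hγθ.le⟩
  have hslope := tendsto_slope_integral_hankelIntegrand hγ₀ one_pos hθ hcos
  rw [integral_hankelIntegrand_one_zero one_pos hθ,
    integral_hankelIntegrand_one_zero (by linarith) hθ] at hslope
  have hpow : Tendsto (fun τ : ℝ ↦ τ ^ (-γ)) atTop (𝓝[>] 0) :=
    tendsto_nhdsWithin_iff.2 ⟨tendsto_rpow_neg_atTop hγ₀,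
      (eventually_gt_atTop 0).mono fun τ hτ ↦ rpow_pos_of_pos hτ _⟩
  have hlim := (((Complex.continuous_im.tendsto _).comp hslope).comp hpow).const_mul π⁻¹
  convert hlim.congr' ?_ using 2
  · have him : (Complex.exp ((1 + γ : ℝ) * π * I)).im = -sin (π * γ) := by
      rw [← Complex.ofReal_mul, Complex.exp_ofReal_mul_I_im, add_mul, one_mul, add_comm,
        sin_add_pi, mul_comm]
    rw [Complex.neg_im, Complex.im_ofReal_mul, him]
    ring
  · filter_upwards [eventually_gt_atTop 0] with τ hτ
    rw [stableDensity_eq_im_integral_of_pos hγ₀ hγ₁ hτ hθ hγθ, rpow_add hτ, rpow_one]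
    simp only [Function.comp_apply, Complex.smul_im, Complex.sub_im, Gamma_one, Complex.ofReal_one,
      one_mul, Complex.exp_pi_mul_I, Complex.neg_im, Complex.one_im, neg_zero, sub_zero,
      smul_eq_mul, rpow_neg hτ.le, inv_inv]
    field_simp

theorem integrable_stableDensity (hγ₀ : 0 < γ) (hγ₁ : γ < 1) : Integrable (stableDensity γ) := by
  refine (contDiff_stableDensity hγ₀ hγ₁).continuous.locallyIntegrable
    |>.integrable_of_isBigO_atBot_atTop (g := fun _ ↦ (0 : ℝ)) (g' := fun τ ↦ τ ^ (-(1 + γ)))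
    ?_ ((integrable_zero _ _ _).integrableAtFilter _) ?_
    ⟨Set.Ioi 1, Ioi_mem_atTop 1, integrableOn_Ioi_rpow_of_lt (by linarith) one_pos⟩
  · refine EventuallyEq.isBigO ?_
    filter_upwards [eventually_le_atBot 0] with τ hτ
    exact stableDensity_eq_zero_of_nonpos hγ₀ hγ₁ hτ
  · have h := ((tendsto_rpow_mul_stableDensity hγ₀ hγ₁).isBigO_one ℝ).mul
      (Asymptotics.isBigO_refl (fun τ : ℝ ↦ τ ^ (-(1 + γ))) atTop)
    simp only [one_mul] at h
    refine h.congr' ?_ .rfl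
    filter_upwards [eventually_gt_atTop 0] with τ hτ
    rw [mul_right_comm, ← rpow_add hτ, add_neg_cancel, rpow_zero, one_mul]

lemma fourier_stableDensity (hγ₀ : 0 < γ) (hγ₁ : γ < 1) :
    𝓕 (fun τ ↦ (stableDensity γ τ : ℂ)) = stableFourier γ := by
  have hp : (fun τ ↦ (stableDensity γ τ : ℂ)) = 𝓕⁻ (stableFourier γ) :=
    funext (ofReal_stableDensity hγ₀ hγ₁)
  have hint : Integrable (𝓕 (stableFourier γ)) := by
    have h := (integrable_stableDensity hγ₀ hγ₁).ofReal (𝕜 := ℂ)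
    refine h.comp_neg.congr (ae_of_all _ fun τ ↦ ?_)
    change ((stableDensity γ (-τ) : ℝ) : ℂ) = 𝓕 (stableFourier γ) τ
    rw [ofReal_stableDensity hγ₀ hγ₁, Real.fourierInv_eq_fourier_neg, neg_neg]
  rw [hp]
  exact (continuous_stableFourier hγ₀).fourier_fourierInv_eq (integrable_stableFourier hγ₀ hγ₁) hint

end StableDensity

section StableLaplace

variable {γ : ℝ}

lemma diffContOnCl_exp_neg_cpow (hγ₀ : 0 < γ) :
    DiffContOnCl ℂ (fun z : ℂ ↦ Complex.exp (-z ^ (γ : ℂ))) {z | 0 < z.re} where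
  differentiableOn := fun _ hz ↦
    (differentiableAt_id.cpow_const (.inl hz)).neg.cexp.differentiableWithinAt
  continuousOn := by
    rw [Complex.closure_setOfPred_lt_re]
    exact (continuousOn_cpow_of_re_nonneg hγ₀).neg.cexp

lemma norm_exp_neg_cpow_le_one (hγ₀ : 0 < γ) (hγ₁ : γ < 1) {z : ℂ} (hz : 0 ≤ z.re) :
    ‖Complex.exp (-z ^ (γ : ℂ))‖ ≤ 1 := by
  have h : 0 ≤ cos (γ * (π / 2)) * ‖z‖ ^ γ :=
    mul_nonneg (cos_mul_pi_div_two_pos hγ₀ hγ₁).le (by positivity)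
  rw [Complex.norm_exp, Complex.neg_re, exp_le_one_iff, neg_nonpos]
  exact h.trans (cos_mul_norm_rpow_le_re_cpow hγ₀.le (by linarith) hz)

lemma laplace_stableDensity_mul_I (hγ₀ : 0 < γ) (hγ₁ : γ < 1) (y : ℝ) :
    ∫ τ : ℝ in Set.Ioi 0, Complex.exp (-(y * I * τ)) • (stableDensity γ τ : ℂ) =
      Complex.exp (-(y * I) ^ (γ : ℂ)) := by
  have hsupp : ∀ τ ∉ Set.Ioi (0 : ℝ),
      Complex.exp (-(y * I * τ)) • (stableDensity γ τ : ℂ) = 0 := fun τ hτ ↦ by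
    rw [stableDensity_eq_zero_of_nonpos hγ₀ hγ₁ (not_lt.1 hτ), Complex.ofReal_zero, smul_zero]
  have hy : (2 * π * (y / (2 * π) : ℝ) : ℂ) = y := by
    push_cast
    field_simp
  have h := congrFun (fourier_stableDensity hγ₀ hγ₁) (y / (2 * π))
  rw [Real.fourier_real_eq_integral_exp_smul, stableFourier, hy] at h
  rw [setIntegral_eq_integral_of_forall_compl_eq_zero hsupp, ← h]
  congr with τ
  congr 2
  push_cast
  field_simp

theorem laplace_stableDensity (hγ₀ : 0 < γ) (hγ₁ : γ < 1) {z : ℂ} (hz : 0 ≤ z.re) :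
    ∫ τ : ℝ in Set.Ioi 0, Complex.exp (-(z * τ)) • (stableDensity γ τ : ℂ) =
      Complex.exp (-z ^ (γ : ℂ)) := by
  have hp : IntegrableOn (fun τ ↦ (stableDensity γ τ : ℂ)) (Set.Ioi 0) :=
    (integrable_stableDensity hγ₀ hγ₁).ofReal.integrableOn
  exact eqOn_right_half_plane_of_bounded (diffContOnCl_integral_exp_neg_mul_smul hp)
    (diffContOnCl_exp_neg_cpow hγ₀)
    (fun w hw ↦ (norm_integral_exp_neg_mul_smul_le hp hw).trans (le_max_left _ 1))
    (fun w hw ↦ (norm_exp_neg_cpow_le_one hγ₀ hγ₁ hw).trans (le_max_right _ _))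
    (laplace_stableDensity_mul_I hγ₀ hγ₁) hz

lemma integral_exp_neg_mul_mul_stableDensity (hγ₀ : 0 < γ) (hγ₁ : γ < 1) {l : ℝ} (hl : 0 ≤ l) :
    ∫ τ in Set.Ioi 0, exp (-(l * τ)) * stableDensity γ τ = exp (-l ^ γ) := by
  have h := laplace_stableDensity hγ₀ hγ₁ (z := l) (by simpa using hl)
  rw [← Complex.ofReal_inj, ← integral_complex_ofReal]
  push_cast [Complex.ofReal_cpow hl]
  exact h

lemma integral_stableDensity (hγ₀ : 0 < γ) (hγ₁ : γ < 1) : ∫ τ, stableDensity γ τ = 1 := by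
  have h := integral_exp_neg_mul_mul_stableDensity hγ₀ hγ₁ le_rfl
  simp only [zero_mul, neg_zero, exp_zero, one_mul, zero_rpow hγ₀.ne'] at h
  rw [← h]
  exact (setIntegral_eq_integral_of_forall_compl_eq_zero fun τ hτ ↦
    stableDensity_eq_zero_of_nonpos hγ₀ hγ₁ (not_lt.1 hτ)).symm

theorem stableDensity_nonneg (hγ₀ : 0 < γ) (hγ₁ : γ < 1) (τ : ℝ) : 0 ≤ stableDensity γ τ := by
  rcases le_or_gt τ 0 with hτ | hτ
  · exact (stableDensity_eq_zero_of_nonpos hγ₀ hγ₁ hτ).ge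
  have hlaplace : Set.EqOn (fun x ↦ ∫ t in Set.Ioi 0, exp (x * t) * stableDensity γ t)
      (fun x ↦ exp (-(-x) ^ γ)) (Set.Iio 0) := fun x (hx : x < 0) ↦ by
    simpa only [neg_mul, neg_neg] using
      integral_exp_neg_mul_mul_stableDensity hγ₀ hγ₁ (neg_nonneg.2 hx.le)
  exact nonneg_of_absolutelyMonotoneOn_integral_exp_mul
    (integrable_stableDensity hγ₀ hγ₁).integrableOn
    (contDiff_stableDensity hγ₀ hγ₁).continuous.continuousOn
    (absolutelyMonotoneOn_congr (absolutelyMonotoneOn_exp_neg_neg_rpow hγ₀.le hγ₁.le) hlaplace) hτ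

end StableLaplace

/-- Subordination density: for `0 < γ < 1` there is a probability density `p_γ`
on `ℝ`, vanishing on `(-∞, 0]`, infinitely differentiable with bounded
derivatives of all orders, with `τ^{1+γ} p_γ(τ) → C_γ` as `τ → ∞` where
`1/C_γ = ∫₀^∞ (1 - e^{-τ}) τ^{-(1+γ)} dτ`, and such that
`e^{-λ^γ} = ∫₀^∞ e^{-λτ} p_γ(τ) dτ` for every `λ ≥ 0`. -/
theorem stmt11 (γ : ℝ) (hγ0 : 0 < γ) (hγ1 : γ < 1) :
    ∃ p : ℝ → ℝ,
      (∀ τ : ℝ, 0 ≤ p τ) ∧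
      (∀ τ : ℝ, τ ≤ 0 → p τ = 0) ∧
      (∫ τ : ℝ, p τ) = 1 ∧
      ContDiff ℝ (⊤ : ℕ∞) p ∧
      (∀ m : ℕ, ∃ B : ℝ, ∀ τ : ℝ, |iteratedDeriv m p τ| ≤ B) ∧
      Tendsto (fun τ : ℝ => τ ^ (1 + γ) * p τ) atTop
        (nhds ((∫ τ in Set.Ioi (0 : ℝ), (1 - Real.exp (-τ)) / τ ^ (1 + γ))⁻¹)) ∧
      (∀ l : ℝ, 0 ≤ l →
        Real.exp (-l ^ γ) = ∫ τ in Set.Ioi (0 : ℝ), Real.exp (-(l * τ)) * p τ) := by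
  rw [inv_integral_one_sub_exp_neg_div_rpow hγ0 hγ1]
  exact ⟨stableDensity γ, stableDensity_nonneg hγ0 hγ1,
    fun _ ↦ stableDensity_eq_zero_of_nonpos hγ0 hγ1,
    integral_stableDensity hγ0 hγ1,
    contDiff_stableDensity hγ0 hγ1,
    exists_abs_iteratedDeriv_stableDensity_le hγ0 hγ1,
    tendsto_rpow_mul_stableDensity hγ0 hγ1,
    fun _ hl ↦ (integral_exp_neg_mul_mul_stableDensity hγ0 hγ1 hl).symm⟩
end
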